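/- arXiv:1711.11469 — 10 statements merged into one kernel-verified Lean document; each statement's English description precedes it below -/
import Mathlib

section
/- For every positive integer n and every real number k with 0 ≤ k ≤ n and k not an integer, let d = min{2⌊min{k, n−k}⌋ + 2, n}. Then there do not exist polynomials f₁, …, fₙ, f ∈ ℝ[x₁, …, xₙ] and a finite family g₁, …, g_m ∈ ℝ[x₁, …, xₙ] such that −1 = Σ_{i=1}^{n} f_i·(x_i² − x_i) + f·(Σ_{i=1}^{n} x_i − k) + Σ_{j=1}^{m} g_j², where indexdeg(f_i) ≤ d − 1 for all i, indexdeg(f) ≤ d − 1, and 2·indexdeg(g_j) ≤ d for all j. -/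
open MvPolynomial Finset

/-- The index degree of a polynomial in `ℝ[x₁,…,xₙ]`: the maximum, over monomials in the
support, of the number of distinct variables occurring with nonzero exponent. -/
noncomputable def indexDeg {n : ℕ} (p : MvPolynomial (Fin n) ℝ) : ℕ :=
  p.support.sup fun d => d.support.card

namespace Knap

noncomputable def PP (n : ℕ) (k : ℝ) (a b : ℕ) : ℝ :=
  (∏ i ∈ range a, (k - i)) * (∏ i ∈ range b, ((n : ℝ) - k - i)) / ∏ i ∈ range (a + b), ((n : ℝ) - i)

noncomputable def ee (n : ℕ) (k : ℝ) (s : ℕ) : ℝ := PP n k s 0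

lemma den_ne (n s : ℕ) (h : s ≤ n) : ∏ i ∈ range s, ((n : ℝ) - i) ≠ 0 := by
  rw [Finset.prod_ne_zero_iff]
  intro i hi
  have : i < n := lt_of_lt_of_le (mem_range.1 hi) h
  have : (i : ℝ) < n := by exact_mod_cast this
  linarith

lemma den_pos (n s : ℕ) (h : s ≤ n) : 0 < ∏ i ∈ range s, ((n : ℝ) - i) := by
  apply Finset.prod_pos
  intro i hi
  have : i < n := lt_of_lt_of_le (mem_range.1 hi) h
  have : (i : ℝ) < n := by exact_mod_cast this
  linarith

lemma PP_rec (n : ℕ) (k : ℝ) (a b : ℕ) (h : a + b + 1 ≤ n) :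
    PP n k (a + 1) b + PP n k a (b + 1) = PP n k a b := by
  unfold PP
  have e1 : a + 1 + b = a + b + 1 := by ring
  have e2 : a + (b + 1) = a + b + 1 := by ring
  rw [e1, e2]
  have h1 := den_ne n (a + b) (by omega)
  have h2 : (n : ℝ) - ((a + b : ℕ) : ℝ) ≠ 0 := by
    have : ((a + b : ℕ) : ℝ) < n := by exact_mod_cast h
    linarith
  rw [prod_range_succ _ a, prod_range_succ _ b, prod_range_succ _ (a + b)]
  rw [← add_div, div_eq_div_iff (mul_ne_zero h1 h2) h1]
  push_cast
  ring

lemma PP_nonneg (n : ℕ) (k : ℝ) (t : ℕ) (h : 2 * t ≤ n) (h1 : (t : ℝ) ≤ k + 1)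
    (h2 : (t : ℝ) ≤ n - k + 1) : 0 ≤ PP n k t t := by
  unfold PP
  refine div_nonneg (mul_nonneg ?_ ?_) (den_pos n _ (by omega)).le <;>
  · apply Finset.prod_nonneg
    intro i hi
    have : i + 1 ≤ t := mem_range.1 hi
    have : (i : ℝ) + 1 ≤ t := by exact_mod_cast this
    linarith

lemma ee_zero (n : ℕ) (k : ℝ) : ee n k 0 = 1 := by simp [ee, PP]

lemma ee_succ (n : ℕ) (k : ℝ) (s : ℕ) (h : s < n) :
    ((n : ℝ) - s) * ee n k (s + 1) = (k - s) * ee n k s := by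
  unfold ee PP
  have h1 := den_ne n s (by omega)
  have h2 : (n : ℝ) - (s : ℝ) ≠ 0 := by
    have : (s : ℝ) < n := by exact_mod_cast h
    linarith
  simp only [add_zero, prod_range_succ, range_zero, prod_empty, mul_one]
  field_simp

lemma ee_sum (n : ℕ) (k : ℝ) (Q : Finset (Fin n)) (h : Q.card < n) :
    ∑ i, ee n k (insert i Q).card = k * ee n k Q.card := by
  rw [← Finset.sum_add_sum_compl Q]
  have h1 : ∑ i ∈ Q, ee n k (insert i Q).card = Q.card * ee n k Q.card := by
    rw [Finset.sum_congr rfl (g := fun _ => ee n k Q.card)]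
    · simp
    · intro i hi; rw [insert_eq_of_mem hi]
  have h2 : ∑ i ∈ Qᶜ, ee n k (insert i Q).card = ((n : ℝ) - Q.card) * ee n k (Q.card + 1) := by
    rw [Finset.sum_congr rfl (g := fun _ => ee n k (Q.card + 1))]
    · rw [sum_const, card_compl, nsmul_eq_mul, Fintype.card_fin, Nat.cast_sub h.le]
    · intro i hi; rw [card_insert_of_notMem (mem_compl.1 hi)]
  rw [h1, h2, ee_succ n k _ h]
  ring

lemma PP_powerset (n : ℕ) (k : ℝ) (I : Finset (Fin n)) : ∀ (N b : ℕ), I.card ≤ N → N + b ≤ n →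
    ∑ R ∈ I.powerset, PP n k (N - R.card) (b + R.card) = PP n k (N - I.card) b := by
  induction I using Finset.induction_on with
  | empty => intro N b _ _; simp
  | insert x I hx ih =>
    intro N b hN hb
    rw [card_insert_of_notMem hx] at hN ⊢
    rw [Finset.sum_powerset_insert hx, ih N b (by omega) hb]
    have : ∑ R ∈ I.powerset, PP n k (N - (insert x R).card) (b + (insert x R).card)
        = ∑ R ∈ I.powerset, PP n k ((N - 1) - R.card) ((b + 1) + R.card) := by
      apply Finset.sum_congr rfl
      intro R hR
      have hxR : x ∉ R := fun h => hx (mem_powerset.1 hR h)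
      rw [card_insert_of_notMem hxR]
      congr 1 <;> omega
    rw [this, ih (N - 1) (b + 1) (by omega) (by omega)]
    have := PP_rec n k (N - (I.card + 1)) b (by omega)
    rw [← this]
    congr 2 <;> omega

lemma ee_union (n : ℕ) (k : ℝ) (S T : Finset (Fin n)) (h : S.card + T.card ≤ n) :
    ee n k (S ∪ T).card =
      ∑ R ∈ T.powerset, if R ⊆ S then PP n k (S.card + T.card - R.card) R.card else 0 := by
  have h1 := PP_powerset n k (S ∩ T) (S.card + T.card) 0
    ((card_le_card inter_subset_left).trans (by omega)) (by omega)
  have h2 := card_union_add_card_inter S T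
  have h3 : S.card + T.card - (S ∩ T).card = (S ∪ T).card := by omega
  rw [h3] at h1
  unfold ee
  rw [← h1, ← Finset.sum_filter]
  simp only [zero_add]
  apply Finset.sum_congr _ (fun _ _ => rfl)
  ext R
  simp only [mem_powerset, mem_filter, subset_inter_iff, and_comm]

/-- reindexing (S, i ∈ S) with (R, i ∉ R) -/
lemma sum_erase_insert {n : ℕ} (f : Finset (Fin n) → Finset (Fin n) → ℝ) :
    ∑ S : Finset (Fin n), ∑ i ∈ S, f (S.erase i) S
      = ∑ R : Finset (Fin n), ∑ i ∈ Rᶜ, f R (insert i R) := by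
  rw [Finset.sum_sigma', Finset.sum_sigma']
  refine Finset.sum_bij' (fun p _ => ⟨p.1.erase p.2, p.2⟩) (fun p _ => ⟨insert p.2 p.1, p.2⟩)
    ?_ ?_ ?_ ?_ ?_
  · rintro ⟨S, i⟩ h; simp
  · rintro ⟨S, i⟩ h; simp
  · rintro ⟨S, i⟩ h
    have : i ∈ S := by simpa using h
    simp [insert_erase this]
  · rintro ⟨S, i⟩ h
    have : i ∉ S := by simpa using h
    simp [erase_insert this]
  · rintro ⟨S, i⟩ h
    have : i ∈ S := by simpa using h
    simp [insert_erase this]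

noncomputable def UU (n t : ℕ) : (Finset (Fin n) → ℝ) →ₗ[ℝ] (Finset (Fin n) → ℝ) where
  toFun v S := ∑ i ∈ S, if (S.erase i).card + 1 = t then v (S.erase i) else 0
  map_add' v w := by
    ext S
    simp only [Pi.add_apply, ← Finset.sum_add_distrib]
    refine Finset.sum_congr rfl fun i _ => ?_
    split_ifs <;> simp
  map_smul' c v := by
    ext S
    simp [Finset.mul_sum]

lemma UU_supp {n t : ℕ} (v : Finset (Fin n) → ℝ) (S : Finset (Fin n)) (h : S.card ≠ t) :
    UU n t v S = 0 := by
  show ∑ i ∈ S, _ = _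
  apply Finset.sum_eq_zero
  intro i hi
  rw [card_erase_add_one hi, if_neg h]

lemma UU_adj {n t : ℕ} (v w : Finset (Fin n) → ℝ) :
    ∑ S, UU n t v S * w S = ∑ R, (if R.card + 1 = t then v R else 0) * ∑ i ∈ Rᶜ, w (insert i R) := by
  have := sum_erase_insert (n := n) (fun R S => (if R.card + 1 = t then v R else 0) * w S)
  simp only [Finset.mul_sum]
  rw [← this]
  refine Finset.sum_congr rfl fun S _ => ?_
  rw [← Finset.sum_mul]
  rfl

lemma exists_proj {ι : Type*} [Fintype ι] (U : (ι → ℝ) →ₗ[ℝ] (ι → ℝ)) (a : ι → ℝ) :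
    ∃ v, ∀ w, ∑ S, U w S * (a - U v) S = 0 := by
  classical
  let e := (WithLp.linearEquiv 2 ℝ (ι → ℝ)).symm
  let K : Submodule ℝ (EuclideanSpace ℝ ι) := (LinearMap.range U).map e.toLinearMap
  obtain ⟨y, hy, z, hz, hyz⟩ := K.exists_add_mem_mem_orthogonal (e a)
  obtain ⟨_, ⟨v, rfl⟩, rfl⟩ := hy
  refine ⟨v, fun w => ?_⟩
  have h1 : z = e (a - U v) := by
    rw [map_sub, hyz]; simp
  have h2 := (Submodule.mem_orthogonal K z).1 hz (e (U w)) ⟨U w, ⟨w, rfl⟩, rfl⟩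
  rw [h1, PiLp.inner_apply] at h2
  rw [← h2]
  refine Finset.sum_congr rfl fun S _ => ?_
  simp [e, mul_comm]

/-- harmonic functions of level t have vanishing up-sums -/
lemma upsum {n t : ℕ} (h : Finset (Fin n) → ℝ) (hs : ∀ S, S.card ≠ t → h S = 0)
    (hD : ∀ R : Finset (Fin n), R.card + 1 = t → ∑ i ∈ Rᶜ, h (insert i R) = 0) :
    ∀ (m : ℕ) (R : Finset (Fin n)), R.card + (m + 1) = t → ∑ S, (if R ⊆ S then h S else 0) = 0 := by
  have key : ∀ R : Finset (Fin n), ∑ i ∈ Rᶜ, ∑ S, (if insert i R ⊆ S then h S else 0)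
      = ((t : ℝ) - R.card) * ∑ S, (if R ⊆ S then h S else 0) := by
    intro R
    rw [Finset.sum_comm, Finset.mul_sum]
    refine Finset.sum_congr rfl fun S _ => ?_
    by_cases hSt : S.card = t
    · by_cases hRS : R ⊆ S
      · simp only [insert_subset_iff, hRS, and_true, if_true]
        rw [← Finset.sum_filter, Finset.sum_const]
        have : (Rᶜ.filter (fun i => i ∈ S)) = S \ R := by
          ext i; simp [and_comm]
        rw [this, card_sdiff_of_subset hRS, nsmul_eq_mul, Nat.cast_sub (card_le_card hRS), hSt]
      · simp [insert_subset_iff, hRS]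
    · simp [hs S hSt]
  have top : ∀ R : Finset (Fin n), R.card = t → ∑ S, (if R ⊆ S then h S else 0) = h R := by
    intro R hR
    rw [Finset.sum_eq_single R]
    · simp
    · intro S _ hSR
      split_ifs with hRS
      · apply hs
        intro hc
        exact hSR (eq_of_subset_of_card_le hRS (by omega)).symm
      · rfl
    · simp
  intro m
  induction m with
  | zero =>
    intro R hR
    have h1 := key R
    have h2 : (t : ℝ) - R.card = 1 := by rw [← hR]; push_cast; ring
    rw [h2, one_mul] at h1
    rw [← h1]
    refine Eq.trans (Finset.sum_congr rfl fun i hi => ?_) (hD R hR)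
    apply top
    rw [card_insert_of_notMem (mem_compl.1 hi)]; exact hR
  | succ m ih =>
    intro R hR
    have h1 := key R
    rw [Finset.sum_eq_zero] at h1
    · have h2 : (t : ℝ) - R.card ≠ 0 := by rw [← hR]; push_cast; have : (0:ℝ) ≤ m := m.cast_nonneg; intro h; linarith
      rcases mul_eq_zero.1 h1.symm with h3 | h3
      · exact absurd h3 h2
      · exact h3
    · intro i hi
      apply ih
      rw [card_insert_of_notMem (mem_compl.1 hi)]; omega

noncomputable def FF (n : ℕ) (k : ℝ) (a : Finset (Fin n) → ℝ) (T : Finset (Fin n)) : ℝ :=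
  ∑ S, a S * ee n k (S ∪ T).card

lemma FF_add (n : ℕ) (k : ℝ) (a b : Finset (Fin n) → ℝ) (T) :
    FF n k (a + b) T = FF n k a T + FF n k b T := by
  simp [FF, add_mul, Finset.sum_add_distrib]

lemma FF_symm (n : ℕ) (k : ℝ) (a b : Finset (Fin n) → ℝ) :
    ∑ T, a T * FF n k b T = ∑ T, b T * FF n k a T := by
  simp only [FF, Finset.mul_sum]
  rw [Finset.sum_comm]
  refine Finset.sum_congr rfl fun S _ => Finset.sum_congr rfl fun T _ => ?_
  rw [union_comm]; ring

lemma FF_harm {n t : ℕ} (k : ℝ) (h2t : 2 * t ≤ n) (h : Finset (Fin n) → ℝ)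
    (hs : ∀ S, S.card ≠ t → h S = 0)
    (hD : ∀ R : Finset (Fin n), R.card + 1 = t → ∑ i ∈ Rᶜ, h (insert i R) = 0)
    (T : Finset (Fin n)) (hT : T.card ≤ t) : FF n k h T = PP n k t t * h T := by
  have h1 : FF n k h T = ∑ R ∈ T.powerset, PP n k (t + T.card - R.card) R.card *
      ∑ S, (if R ⊆ S then h S else 0) := by
    unfold FF
    simp only [Finset.mul_sum]
    rw [Finset.sum_comm]
    refine Finset.sum_congr rfl fun S _ => ?_
    by_cases hSt : S.card = t
    · rw [ee_union n k S T (by omega), hSt, Finset.mul_sum]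
      refine Finset.sum_congr rfl fun R _ => ?_
      split_ifs <;> ring
    · simp [hs S hSt]
  rw [h1, Finset.sum_eq_single T]
  · by_cases hTt : T.card = t
    · rw [hTt, Finset.sum_eq_single T]
      · simp
      · intro S _ hST
        split_ifs with hTS
        · apply hs
          intro hc
          exact hST (eq_of_subset_of_card_le hTS (by omega)).symm
        · rfl
      · simp
    · rw [hs T hTt, upsum h hs hD (t - T.card - 1) T (by omega)]; simp
  · intro R hR hne
    have hlt : R.card < T.card := card_lt_card (ssubset_of_subset_of_ne (mem_powerset.1 hR) hne)
    rw [upsum h hs hD (t - R.card - 1) R (by omega), mul_zero]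
  · simp

lemma FF_UU {n t : ℕ} (k : ℝ) (h2t : 2 * t ≤ n) (v : Finset (Fin n) → ℝ)
    (T : Finset (Fin n)) (hT : T.card ≤ t) :
    FF n k (UU n t v) T
      = FF n k (fun R => if R.card + 1 = t then (k - t + 1) * v R else 0) T := by
  unfold FF
  rw [UU_adj]
  refine Finset.sum_congr rfl fun R _ => ?_
  beta_reduce
  split_ifs with hR
  · have hc : (R ∪ T).card < n := lt_of_le_of_lt (card_union_le R T) (by omega)
    have h1 := ee_sum n k (R ∪ T) hc
    rw [← Finset.sum_add_sum_compl R] at h1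
    have h2 : ∑ i ∈ R, ee n k (insert i (R ∪ T)).card = R.card * ee n k (R ∪ T).card := by
      rw [Finset.sum_congr rfl (g := fun _ => ee n k (R ∪ T).card)]
      · simp
      · intro i hi; rw [insert_eq_of_mem (mem_union_left _ hi)]
    have h3 : (R.card : ℝ) = t - 1 := by rw [← hR]; push_cast; ring
    rw [h2, h3] at h1
    simp only [insert_union]
    have h4 : ∑ i ∈ Rᶜ, ee n k (insert i (R ∪ T)).card = (k - t + 1) * ee n k (R ∪ T).card := by
      linarith
    rw [h4]; ring
  · simp

theorem core (n : ℕ) (k : ℝ) : ∀ (t : ℕ), 2 * t ≤ n + 2 → (t : ℝ) ≤ k + 2 → (t : ℝ) ≤ n - k + 2 →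
    ∀ a : Finset (Fin n) → ℝ, (∀ S, t ≤ S.card → a S = 0) → 0 ≤ ∑ T, a T * FF n k a T := by
  intro t
  induction t with
  | zero =>
    intro _ _ _ a ha
    simp [ha]
  | succ t ih =>
    intro h1 h2 h3 a ha
    push_cast at h2 h3
    have h2t : 2 * t ≤ n := by omega
    let top : Finset (Fin n) → ℝ := fun S => if S.card = t then a S else 0
    obtain ⟨v, hv⟩ := exists_proj (UU n t) top
    let h := top - UU n t v
    let c : Finset (Fin n) → ℝ := fun R => if R.card + 1 = t then (k - t + 1) * v R else 0
    let g := (a - top) + c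
    have hs : ∀ S, S.card ≠ t → h S = 0 := by
      intro S hS
      simp [h, top, hS, UU_supp v S hS]
    have hD : ∀ R : Finset (Fin n), R.card + 1 = t → ∑ i ∈ Rᶜ, h (insert i R) = 0 := by
      intro R hR
      have := hv (Pi.single R 1)
      rw [UU_adj, Finset.sum_eq_single R] at this
      · simpa [hR, h] using this
      · intro S _ hS
        simp [hS]
      · simp
    have hg : ∀ S, t ≤ S.card → g S = 0 := by
      intro S hS
      have : S.card + 1 ≠ t := by omega
      simp only [g, c, top, Pi.add_apply, Pi.sub_apply, if_neg this]
      split_ifs with hSt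
      · simp
      · rw [ha S (by omega)]; simp
    have hFa : ∀ T : Finset (Fin n), T.card ≤ t → FF n k a T = FF n k (g + h) T := by
      intro T hT
      have e1 : a = (a - top) + UU n t v + h := by simp [h]
      conv_lhs => rw [e1]
      rw [FF_add, FF_add, FF_UU k h2t v T hT, FF_add, FF_add]
    have hgh : ∀ S, t < S.card → (g + h) S = 0 := by
      intro S hS
      simp [hg S hS.le, hs S hS.ne']
    have step : ∀ b : Finset (Fin n) → ℝ, (∀ S, t < S.card → b S = 0) →
        ∑ T, b T * FF n k a T = ∑ T, b T * FF n k (g + h) T := by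
      intro b hb
      refine Finset.sum_congr rfl fun T _ => ?_
      by_cases hT : T.card ≤ t
      · rw [hFa T hT]
      · rw [hb T (by omega)]; simp
    rw [step a ha, FF_symm, step _ hgh]
    have h4 : ∑ T, (g + h) T * FF n k (g + h) T
        = ∑ T, g T * FF n k g T + 2 * ∑ T, g T * FF n k h T + ∑ T, h T * FF n k h T := by
      have := FF_symm n k h g
      simp only [Pi.add_apply, FF_add, add_mul, mul_add, Finset.sum_add_distrib]
      rw [this]; ring
    have h5 : ∑ T, g T * FF n k h T = 0 := by
      apply Finset.sum_eq_zero
      intro T _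
      by_cases hT : t ≤ T.card
      · rw [hg T hT, zero_mul]
      · rw [FF_harm k h2t h hs hD T (by omega), hs T (by omega)]; simp
    have h6 : 0 ≤ ∑ T, h T * FF n k h T := by
      apply Finset.sum_nonneg
      intro T _
      by_cases hT : T.card = t
      · rw [FF_harm k h2t h hs hD T hT.le]
        have := PP_nonneg n k t h2t (by linarith) (by linarith)
        have := mul_nonneg this (mul_self_nonneg (h T))
        linarith
      · rw [hs T hT, zero_mul]
    have h7 := ih (by omega) (by linarith) (by linarith) g hg
    rw [h4, h5]
    linarith

/-- the pseudo-expectation -/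
noncomputable def LL (n : ℕ) (k : ℝ) : MvPolynomial (Fin n) ℝ →ₗ[ℝ] ℝ :=
  (MvPolynomial.basisMonomials (Fin n) ℝ).constr ℝ (fun d => ee n k d.support.card)

lemma LL_monomial (n : ℕ) (k : ℝ) (d : Fin n →₀ ℕ) (c : ℝ) :
    LL n k (monomial d c) = c * ee n k d.support.card := by
  have h := (MvPolynomial.basisMonomials (Fin n) ℝ).constr_basis ℝ
    (fun d => ee n k d.support.card) d
  have h2 : monomial d c = c • (monomial d (1 : ℝ)) := by simp [smul_monomial]
  rw [h2, map_smul, smul_eq_mul]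
  rw [MvPolynomial.coe_basisMonomials] at h
  congr 1

lemma supp_add {n : ℕ} (d d' : Fin n →₀ ℕ) : (d + d').support = d.support ∪ d'.support := by
  ext i; simp; omega

lemma LL_sq (n : ℕ) (k : ℝ) (f : MvPolynomial (Fin n) ℝ) (i : Fin n) :
    LL n k (f * (X i ^ 2 - X i)) = 0 := by
  induction f using MvPolynomial.induction_on' with
  | monomial d c =>
    rw [mul_sub, map_sub, X_pow_eq_monomial, monomial_mul, X, monomial_mul, LL_monomial, LL_monomial,
      supp_add, supp_add, Finsupp.support_single_ne_zero _ two_ne_zero,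
      Finsupp.support_single_ne_zero _ one_ne_zero]
    simp
  | add p q hp hq => rw [add_mul, map_add, hp, hq, add_zero]

lemma card_le_of_mem {n : ℕ} (f : MvPolynomial (Fin n) ℝ) (d : Fin n →₀ ℕ) (hd : d ∈ f.support) :
    d.support.card ≤ indexDeg f := by
  unfold indexDeg
  exact Finset.le_sup (f := fun d : Fin n →₀ ℕ => d.support.card) hd

lemma LL_lin (n : ℕ) (k : ℝ) (f : MvPolynomial (Fin n) ℝ) (hf : indexDeg f < n) :
    LL n k (f * ((∑ i, X i) - C k)) = 0 := by
  conv_lhs => rw [f.as_sum]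
  rw [Finset.sum_mul, map_sum]
  apply Finset.sum_eq_zero
  intro d hd
  have hc := lt_of_le_of_lt (card_le_of_mem f d hd) hf
  rw [mul_sub, map_sub, Finset.mul_sum, map_sum]
  have h1 : ∀ i, LL n k (monomial d (coeff d f) * X i)
      = coeff d f * ee n k (insert i d.support).card := by
    intro i
    rw [X, monomial_mul, LL_monomial, supp_add, Finsupp.support_single_ne_zero _ one_ne_zero,
      mul_one, union_comm]
    rfl
  simp only [h1]
  rw [← Finset.mul_sum, ee_sum n k _ hc, mul_comm (monomial d _) (C k), C_mul_monomial, LL_monomial]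
  ring

lemma LL_square (n : ℕ) (k : ℝ) (g : MvPolynomial (Fin n) ℝ) (t : ℕ) (hg : indexDeg g ≤ t)
    (h1 : 2 * t ≤ n) (h2 : (t : ℝ) ≤ k + 1) (h3 : (t : ℝ) ≤ n - k + 1) :
    0 ≤ LL n k (g ^ 2) := by
  let a : Finset (Fin n) → ℝ := fun S => ∑ d ∈ g.support with d.support = S, coeff d g
  have ha : ∀ S, t + 1 ≤ S.card → a S = 0 := by
    intro S hS
    apply Finset.sum_eq_zero
    intro d hd
    obtain ⟨hd1, hd2⟩ := Finset.mem_filter.1 hd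
    have := card_le_of_mem g d hd1
    rw [hd2] at this
    omega
  have hc := core n k (t + 1) (by omega) (by push_cast; linarith) (by push_cast; linarith) a ha
  have hsum : ∀ w : Finset (Fin n) → ℝ, ∑ S, a S * w S = ∑ d ∈ g.support, coeff d g * w d.support := by
    intro w
    rw [← Finset.sum_fiberwise g.support (fun d => d.support)]
    refine Finset.sum_congr rfl fun S _ => ?_
    rw [Finset.sum_mul]
    refine Finset.sum_congr rfl fun d hd => ?_
    rw [(Finset.mem_filter.1 hd).2]
  have : LL n k (g ^ 2) = ∑ T, a T * FF n k a T := by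
    rw [hsum, pow_two]
    conv_lhs => rw [g.as_sum]
    rw [Finset.sum_mul_sum, map_sum]
    refine Finset.sum_congr rfl fun d _ => ?_
    unfold FF
    rw [hsum, map_sum, Finset.mul_sum]
    refine Finset.sum_congr rfl fun d' _ => ?_
    rw [monomial_mul, LL_monomial, supp_add, union_comm]
    ring
  rw [this]
  exact hc

end Knap

theorem knapsack_indexdeg_sos_lower_bound (n : ℕ) (hn : 0 < n) (k : ℝ)
    (hk0 : 0 ≤ k) (hkn : k ≤ n) (hknotint : ∀ z : ℤ, k ≠ z) :
    ¬ ∃ (f : Fin n → MvPolynomial (Fin n) ℝ) (f0 : MvPolynomial (Fin n) ℝ)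
        (m : ℕ) (g : Fin m → MvPolynomial (Fin n) ℝ),
      (∀ i, indexDeg (f i) ≤ min (2 * (⌊min k ((n : ℝ) - k)⌋).toNat + 2) n - 1) ∧
      indexDeg f0 ≤ min (2 * (⌊min k ((n : ℝ) - k)⌋).toNat + 2) n - 1 ∧
      (∀ j, 2 * indexDeg (g j) ≤ min (2 * (⌊min k ((n : ℝ) - k)⌋).toNat + 2) n) ∧
      (-1 : MvPolynomial (Fin n) ℝ) =
        (∑ i, f i * (X i ^ 2 - X i)) + f0 * ((∑ i, X i) - C k) +
        ∑ j, (g j) ^ 2 := by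
  rintro ⟨f, f0, m, g, -, hf0, hg, heq⟩
  have hmin : 0 ≤ min k ((n : ℝ) - k) := le_min hk0 (by linarith)
  have hfl : (((⌊min k ((n : ℝ) - k)⌋).toNat : ℕ) : ℝ) ≤ min k ((n : ℝ) - k) := by
    have h1 : (((⌊min k ((n : ℝ) - k)⌋).toNat : ℕ) : ℤ) = ⌊min k ((n : ℝ) - k)⌋ :=
      Int.toNat_of_nonneg (Int.floor_nonneg.2 hmin)
    have h2 := Int.floor_le (min k ((n : ℝ) - k))
    rw [← h1] at h2
    exact_mod_cast h2
  generalize (⌊min k ((n : ℝ) - k)⌋).toNat = q at *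
  have hq1 : (q : ℝ) ≤ k := hfl.trans (min_le_left _ _)
  have hq2 : (q : ℝ) ≤ n - k := hfl.trans (min_le_right _ _)
  have hL := congrArg (Knap.LL n k) heq
  rw [map_add, map_add, map_sum, map_sum, Knap.LL_lin n k f0 (by omega)] at hL
  simp only [Knap.LL_sq, Finset.sum_const_zero, zero_add] at hL
  have h1 : Knap.LL n k (-1) = -1 := by
    have := Knap.LL_monomial n k 0 (-1)
    simpa [Knap.ee_zero] using this
  have h2 : 0 ≤ ∑ j, Knap.LL n k (g j ^ 2) := by
    apply Finset.sum_nonneg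
    intro j _
    have hj := hg j
    have hj' : indexDeg (g j) ≤ q + 1 := by omega
    have hj2 : ((indexDeg (g j) : ℕ) : ℝ) ≤ q + 1 := by exact_mod_cast hj'
    exact Knap.LL_square n k (g j) _ le_rfl (by omega) (by linarith) (by linarith)
  linarith
end

section
/- For every positive integer n and every real number k with 0 ≤ k ≤ n and k not an integer, let D = min{2⌊min{k, n−k}⌋ + 3, n}. Then there do not exist polynomials f₁, …, fₙ, f ∈ ℝ[x₁, …, xₙ] and a finite family g₁, …, g_m ∈ ℝ[x₁, …, xₙ] such that −1 = Σ_{i=1}^{n} f_i·(x_i² − x_i) + f·(Σ_{i=1}^{n} x_i − k) + Σ_{j=1}^{m} g_j², where deg(f_i) ≤ D − 2 for all i, deg(f) ≤ D − 1, and 2·deg(g_j) ≤ D for all j. -/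
open MvPolynomial Finset

/-- Pseudo-moment weights `(k)_m / (n)_m`. -/
noncomputable def kw (n k : ℝ) (m : ℕ) : ℝ := ∏ i ∈ range m, (k - i) / (n - i)

lemma kw_zero (n k : ℝ) : kw n k 0 = 1 := by simp [kw]

lemma kw_succ (n k : ℝ) (m : ℕ) : kw n k (m + 1) = kw n k m * ((k - m) / (n - m)) := by
  simp only [kw, prod_range_succ]

lemma kw_step (N : ℕ) (k : ℝ) (m : ℕ) (h : m < N) :
    m * kw N k m + (N - m) * kw N k (m + 1) = k * kw N k m := by
  have : (N : ℝ) - m ≠ 0 := by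
    have : (m : ℝ) < N := by exact_mod_cast h
    linarith
  rw [kw_succ]
  field_simp
  ring

lemma kw_diff (N : ℕ) (k : ℝ) (m : ℕ) (h : m + 2 ≤ N) :
    kw N k (m + 1) - kw N k (m + 2) =
      k * (N - k) / (N * (N - 1)) * kw ((N - 2 : ℕ) : ℝ) (k - 1) m := by
  have h2 : ((N - 2 : ℕ) : ℝ) = N - 2 := by
    rw [Nat.cast_sub (by omega)]; norm_num
  induction m with
  | zero =>
    have h' : (2 : ℝ) ≤ N := by exact_mod_cast h
    have a1 : (N : ℝ) ≠ 0 := by linarith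
    have a2 : (N : ℝ) - 1 ≠ 0 := by linarith
    simp only [kw_succ, kw_zero, Nat.cast_zero]
    norm_num
    field_simp
    ring
  | succ m ih =>
    have ih := ih (by omega)
    have h' : (m : ℝ) + 3 ≤ N := by exact_mod_cast h
    rw [kw_succ _ _ m, ← mul_assoc, ← ih, kw_succ _ _ (m + 1 + 1), kw_succ _ _ (m + 1), h2]
    push_cast
    have a1 : (N : ℝ) - (m + 1) ≠ 0 := by linarith
    have a2 : (N : ℝ) - (m + 1 + 1) ≠ 0 := by linarith
    have a3 : (N : ℝ) - 2 - m ≠ 0 := by linarith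
    have a4 : (N : ℝ) - 2 - m = N - (m + 1 + 1) := by ring
    rw [a4]
    field_simp
    ring

lemma psd_of_no_neg {β : Type*} [DecidableEq β] (Q : Finset β) (M : β → β → ℝ)
    (hs : ∀ S T, M S T = M T S)
    (h : ∀ μ < 0, ∀ g : β → ℝ, (∀ S ∈ Q, ∑ T ∈ Q, M S T * g T = μ * g S) → ∀ S ∈ Q, g S = 0)
    (c : β → ℝ) : 0 ≤ ∑ S ∈ Q, ∑ T ∈ Q, c S * c T * M S T := by
  classical
  let A : Matrix Q Q ℝ := Matrix.of fun S T => M S T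
  have hA : A.IsHermitian := by
    ext S T
    simp [A, hs S.1 T.1]
  have hp : A.PosSemidef := by
    rw [hA.posSemidef_iff_eigenvalues_nonneg]
    intro i
    by_contra hneg
    simp only [Pi.zero_apply, not_le] at hneg
    have hev := hA.mulVec_eigenvectorBasis i
    set v := hA.eigenvectorBasis i with hv
    have hv0 : v ≠ 0 := hA.eigenvectorBasis.orthonormal.ne_zero i
    apply hv0
    let g : β → ℝ := fun S => if hS : S ∈ Q then v ⟨S, hS⟩ else 0
    have := h _ hneg g (by
      intro S hS
      have := congrFun hev ⟨S, hS⟩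
      simp only [Matrix.mulVec, dotProduct, Pi.smul_apply, smul_eq_mul] at this
      simp only [g, hS, dif_pos]
      rw [← this, ← Finset.sum_coe_sort Q]
      apply Finset.sum_congr rfl
      intro x _
      simp [A])
    ext ⟨S, hS⟩
    have := this S hS
    simpa [g, hS] using this
  have := hp.dotProduct_mulVec_nonneg (fun S : Q => c S)
  simp only [dotProduct, Matrix.mulVec, A, Matrix.of_apply] at this
  refine this.trans_eq ?_
  rw [← Finset.sum_coe_sort Q]
  apply Finset.sum_congr rfl
  intro S _
  rw [← Finset.sum_coe_sort Q, Finset.mul_sum]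
  apply Finset.sum_congr rfl
  intro T _
  simp
  ring

/-- Subsets of `V` of size at most `d`. -/
def ksub {α : Type*} [DecidableEq α] (V : Finset α) (d : ℕ) : Finset (Finset α) :=
  V.powerset.filter fun S => S.card ≤ d

lemma mem_ksub {α : Type*} [DecidableEq α] {V : Finset α} {d : ℕ} {S : Finset α} :
    S ∈ ksub V d ↔ S ⊆ V ∧ S.card ≤ d := by simp [ksub]

lemma sum_ksub_pair {α : Type*} [DecidableEq α] (V : Finset α) (d : ℕ) (a b : α)
    (ha : a ∈ V) (hb : b ∈ V) (hab : a ≠ b) (h : Finset α → ℝ)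
    (hz : ∀ S, (a ∈ S ↔ b ∈ S) → h S = 0) :
    ∑ S ∈ ksub V (d + 1), h S =
      ∑ R ∈ ksub ((V.erase a).erase b) d, (h (insert a R) + h (insert b R)) := by
  have key : ∀ x y : α, x ∈ V → y ∈ V → x ≠ y →
      ∑ R ∈ ksub ((V.erase x).erase y) d, h (insert x R) =
        ∑ S ∈ (ksub V (d + 1)).filter (fun S => x ∈ S ∧ y ∉ S), h S := by
    intro x y hx hy hxy
    refine Finset.sum_nbij' (fun R => insert x R) (fun S => S.erase x) ?_ ?_ ?_ ?_ ?_
    · intro R hR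
      rw [mem_ksub] at hR
      have hxR : x ∉ R := fun hh => by simpa using hR.1 hh
      have hyR : y ∉ R := fun hh => by simpa using hR.1 hh
      simp only [mem_filter, mem_ksub, card_insert_of_notMem hxR]
      refine ⟨⟨?_, by omega⟩, by simp, by simp [hyR, hxy.symm]⟩
      intro z hz
      rcases mem_insert.1 hz with rfl | hz
      · exact hx
      · have := hR.1 hz
        simp at this
        exact this.2.2
    · intro S hS
      simp only [mem_filter, mem_ksub] at hS ⊢
      rw [card_erase_of_mem hS.2.1]
      refine ⟨?_, by omega⟩
      intro z hz
      simp only [mem_erase] at hz ⊢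
      exact ⟨fun hh => hS.2.2 (hh ▸ hz.2), hz.1, hS.1.1 hz.2⟩
    · intro R hR
      rw [mem_ksub] at hR
      have hxR : x ∉ R := fun hh => by simpa using hR.1 hh
      exact erase_insert hxR
    · intro S hS
      simp only [mem_filter] at hS
      exact insert_erase hS.2.1
    · intro R _
      rfl
  rw [sum_add_distrib, key a b ha hb hab, Finset.erase_right_comm, key b a hb ha hab.symm,
    sum_filter, sum_filter, ← sum_add_distrib]
  apply sum_congr rfl
  intro S _
  by_cases h1 : a ∈ S <;> by_cases h2 : b ∈ S <;> simp [h1, h2]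
  · exact hz S (by simp [h1, h2])
  · exact hz S (by simp [h1, h2])

lemma double_count {α : Type*} [DecidableEq α] (V : Finset α) (j : ℕ) (F : Finset α → ℝ) :
    (j + 1 : ℝ) * ∑ S ∈ powersetCard (j + 1) V, F S =
      ∑ S ∈ powersetCard j V, ∑ i ∈ V \ S, F (insert i S) := by
  have h1 : (j + 1 : ℝ) * ∑ S ∈ powersetCard (j + 1) V, F S =
      ∑ S ∈ powersetCard (j + 1) V, ∑ i ∈ S, F S := by
    rw [mul_sum]
    apply sum_congr rfl
    intro S hS
    rw [sum_const, (mem_powersetCard.1 hS).2]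
    simp
  rw [h1, sum_sigma', sum_sigma']
  refine Finset.sum_nbij' (fun p => ⟨p.1.erase p.2, p.2⟩) (fun p => ⟨insert p.2 p.1, p.2⟩)
    ?_ ?_ ?_ ?_ ?_
  · rintro ⟨S, i⟩ h
    simp only [mem_sigma, mem_powersetCard, mem_sdiff] at h ⊢
    refine ⟨⟨(erase_subset _ _).trans h.1.1, ?_⟩, h.1.1 h.2, by simp⟩
    rw [card_erase_of_mem h.2]; omega
  · rintro ⟨S, i⟩ h
    simp only [mem_sigma, mem_powersetCard, mem_sdiff] at h ⊢
    refine ⟨⟨insert_subset h.2.1 h.1.1, ?_⟩, by simp⟩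
    rw [card_insert_of_notMem h.2.2]; omega
  · rintro ⟨S, i⟩ h
    simp only [mem_sigma] at h
    simp [insert_erase h.2]
  · rintro ⟨S, i⟩ h
    simp only [mem_sigma, mem_sdiff] at h
    simp [erase_insert h.2.2]
  · rintro ⟨S, i⟩ h
    simp only [mem_sigma] at h
    simp [insert_erase h.2]

lemma sum_insert_kw {α : Type*} [DecidableEq α] (V U : Finset α) (hU : U ⊆ V)
    (hc : U.card < V.card) (k : ℝ) :
    ∑ i ∈ V, kw V.card k (insert i U).card = k * kw V.card k U.card := by
  rw [← sum_sdiff hU, ← kw_step V.card k U.card hc, add_comm]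
  congr 1
  · rw [sum_congr rfl (g := fun _ => kw V.card k U.card)]
    · simp
    · intro i hi
      rw [insert_eq_of_mem hi]
  · rw [sum_congr rfl (g := fun _ => kw V.card k (U.card + 1))]
    · rw [sum_const, card_sdiff_of_subset hU, nsmul_eq_mul, Nat.cast_sub hc.le]
    · intro i hi
      rw [card_insert_of_notMem (mem_sdiff.1 hi).2]

lemma sym_const {α : Type*} [DecidableEq α] (V : Finset α) (k : ℝ) (j : ℕ) :
    ∃ A : ℝ, ∀ T ⊆ V, T.card + j ≤ V.card →
      ∑ S ∈ powersetCard j V, kw V.card k (T ∪ S).card = A * kw V.card k T.card := by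
  induction j with
  | zero => exact ⟨1, by simp⟩
  | succ j ih =>
    obtain ⟨A, hA⟩ := ih
    refine ⟨(k - j) / (j + 1) * A, ?_⟩
    intro T hT hc
    have h1 := double_count V j (fun S => kw V.card k (T ∪ S).card)
    have h2 : ∑ S ∈ powersetCard j V, ∑ i ∈ V \ S, kw V.card k (T ∪ insert i S).card =
        ∑ S ∈ powersetCard j V, (k - j) * kw V.card k (T ∪ S).card := by
      apply sum_congr rfl
      intro S hS
      rw [mem_powersetCard] at hS
      have hlt : (T ∪ S).card < V.card := by
        have := card_union_le T S
        omega
      have h3 := sum_insert_kw V (T ∪ S) (union_subset hT hS.1) hlt k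
      rw [← sum_sdiff hS.1] at h3
      have h4 : ∑ i ∈ S, kw V.card k (insert i (T ∪ S)).card = j * kw V.card k (T ∪ S).card := by
        rw [sum_congr rfl (g := fun _ => kw V.card k (T ∪ S).card)]
        · simp [hS.2]
        · intro i hi
          rw [insert_eq_of_mem (mem_union_right _ hi)]
      simp only [union_insert]
      linarith
    rw [h2, ← mul_sum, hA T hT (by omega)] at h1
    have : (j : ℝ) + 1 ≠ 0 := by positivity
    field_simp
    linarith

lemma swap_map_mem {α : Type*} [DecidableEq α] {V : Finset α} {d : ℕ} {a b : α}
    (ha : a ∈ V) (hb : b ∈ V) {S : Finset α} (hS : S ∈ ksub V d) :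
    S.map (Equiv.swap a b).toEmbedding ∈ ksub V d := by
  rw [mem_ksub] at hS ⊢
  refine ⟨?_, by simpa using hS.2⟩
  intro x hx
  obtain ⟨y, hy, rfl⟩ := mem_map.1 hx
  have := hS.1 hy
  simp only [Equiv.coe_toEmbedding, Equiv.swap_apply_def]
  split_ifs <;> assumption

lemma swap_map_map {α : Type*} [DecidableEq α] (a b : α) (S : Finset α) :
    (S.map (Equiv.swap a b).toEmbedding).map (Equiv.swap a b).toEmbedding = S := by
  ext x
  simp [Finset.mem_map_equiv]

lemma swap_map_insert {α : Type*} [DecidableEq α] (a b : α) (R : Finset α)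
    (ha : a ∉ R) (hb : b ∉ R) :
    (insert a R).map (Equiv.swap a b).toEmbedding = insert b R := by
  ext x
  simp only [Finset.mem_map_equiv, mem_insert, Equiv.symm_swap, Equiv.swap_apply_def]
  split_ifs with h1 h2
  · subst h1
    constructor
    · rintro (h | h)
      · exact Or.inl h.symm
      · exact absurd h hb
    · rintro (h | h)
      · exact Or.inl h.symm
      · exact absurd h ha
  · simp [h2]
  · simp [h1, h2]

lemma swap_map_eq {α : Type*} [DecidableEq α] (a b : α) (S : Finset α)
    (h : a ∈ S ↔ b ∈ S) :
    S.map (Equiv.swap a b).toEmbedding = S := by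
  ext x
  simp only [Finset.mem_map_equiv, Equiv.symm_swap, Equiv.swap_apply_def]
  split_ifs with h1 h2
  · subst h1; exact h.symm
  · subst h2; exact h
  · rfl

lemma dep_card {α : Type*} [DecidableEq α] (V : Finset α) (d : ℕ) (g : Finset α → ℝ)
    (h : ∀ a ∈ V, ∀ b ∈ V, a ≠ b → ∀ S ∈ ksub V d,
      g (S.map (Equiv.swap a b).toEmbedding) = g S) :
    ∀ m, ∀ S ∈ ksub V d, ∀ T ∈ ksub V d, S.card = T.card → (S \ T).card = m → g S = g T := by
  intro m
  induction m with
  | zero =>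
    intro S _ T _ hc h0
    rw [card_eq_zero, sdiff_eq_empty_iff_subset] at h0
    rw [eq_of_subset_of_card_le h0 hc.ge]
  | succ m ih =>
    intro S hS T hT hc hm
    have hm' : (T \ S).card = m + 1 := by
      have h1 := card_sdiff_add_card_inter S T
      have h2 := card_sdiff_add_card_inter T S
      rw [inter_comm] at h2
      omega
    obtain ⟨a, ha⟩ := card_pos.1 (by omega : 0 < (S \ T).card)
    obtain ⟨b, hb⟩ := card_pos.1 (by omega : 0 < (T \ S).card)
    rw [mem_sdiff] at ha hb
    have haV := (mem_ksub.1 hS).1 ha.1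
    have hbV := (mem_ksub.1 hT).1 hb.1
    have hab : a ≠ b := fun e => ha.2 (e ▸ hb.1)
    rw [← h a haV b hbV hab S hS]
    apply ih _ (swap_map_mem haV hbV hS) _ hT (by simpa using hc)
    have e : S.map (Equiv.swap a b).toEmbedding \ T = (S \ T).erase a := by
      ext x
      simp only [Finset.mem_map_equiv, Equiv.symm_swap, Equiv.swap_apply_def, mem_sdiff, mem_erase]
      split_ifs with h1 h2
      · subst h1; simp [hb.2]
      · subst h2; simp [hb.1]
      · simp [h1]
    rw [e, card_erase_of_mem (mem_sdiff.2 ha)]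
    omega

theorem kw_psd {α : Type*} [DecidableEq α] (d : ℕ) : ∀ (V : Finset α) (k : ℝ),
    2 * d ≤ V.card → (d : ℝ) - 1 < k → k < V.card - d + 1 → ∀ c : Finset α → ℝ,
    0 ≤ ∑ S ∈ ksub V d, ∑ T ∈ ksub V d, c S * c T * kw V.card k (S ∪ T).card := by
  induction d with
  | zero =>
    intro V k _ _ _ c
    have : ksub V 0 = {∅} := by
      ext S
      simp only [mem_ksub, mem_singleton, Nat.le_zero, card_eq_zero]
      constructor
      · exact fun h => h.2
      · rintro rfl; simp
    rw [this]
    simp [kw_zero, mul_self_nonneg]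
  | succ d ih =>
    intro V k hV hk1 hk2 c
    push_cast at hk1 hk2
    apply psd_of_no_neg (ksub V (d + 1)) (fun S T => kw V.card k (S ∪ T).card)
    · intro S T; rw [union_comm]
    intro μ hμ g hg
    -- swap invariance of the eigenvector
    have hinv : ∀ a ∈ V, ∀ b ∈ V, a ≠ b → ∀ S ∈ ksub V (d + 1),
        g (S.map (Equiv.swap a b).toEmbedding) = g S := by
      intro a ha b hb hab
      let τ : Finset α → Finset α := fun S => S.map (Equiv.swap a b).toEmbedding
      let δ : Finset α → ℝ := fun S => g S - g (τ S)
      have hτ : ∀ S ∈ ksub V (d + 1), ∑ T ∈ ksub V (d + 1),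
          kw V.card k (S ∪ T).card * g (τ T) = μ * g (τ S) := by
        intro S hS
        rw [← hg (τ S) (swap_map_mem ha hb hS)]
        refine Finset.sum_nbij' τ τ (fun T hT => swap_map_mem ha hb hT)
          (fun T hT => swap_map_mem ha hb hT) (fun T _ => swap_map_map a b T)
          (fun T _ => swap_map_map a b T) ?_
        intro T _
        simp only [τ]
        rw [← map_union, card_map]
      have hδ : ∀ S ∈ ksub V (d + 1), ∑ T ∈ ksub V (d + 1),
          kw V.card k (S ∪ T).card * δ T = μ * δ S := by
        intro S hS
        simp only [δ, mul_sub, sum_sub_distrib]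
        rw [hg S hS, hτ S hS]
      have hq : ∑ S ∈ ksub V (d + 1), ∑ T ∈ ksub V (d + 1),
          δ S * δ T * kw V.card k (S ∪ T).card = μ * ∑ S ∈ ksub V (d + 1), δ S ^ 2 := by
        rw [mul_sum]
        apply sum_congr rfl
        intro S hS
        have := hδ S hS
        calc _ = δ S * ∑ T ∈ ksub V (d + 1), kw V.card k (S ∪ T).card * δ T := by
              rw [mul_sum]; apply sum_congr rfl; intro T _; ring
          _ = _ := by rw [this]; ring
      have hδ0 : ∀ S, (a ∈ S ↔ b ∈ S) → δ S = 0 := by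
        intro S hS
        simp only [δ, τ]
        rw [swap_map_eq a b S hS, sub_self]
      set W := (V.erase a).erase b with hW
      have hWc : W.card = V.card - 2 := by
        rw [hW, card_erase_of_mem (mem_erase.2 ⟨hab.symm, hb⟩), card_erase_of_mem ha]
        omega
      have hWa : ∀ R ∈ ksub W d, a ∉ R := fun R hR hh => by
        have := (mem_ksub.1 hR).1 hh
        simp [hW] at this
      have hWb : ∀ R ∈ ksub W d, b ∉ R := fun R hR hh => by
        have := (mem_ksub.1 hR).1 hh
        simp [hW] at this
      have hδb : ∀ R ∈ ksub W d, δ (insert b R) = - δ (insert a R) := by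
        intro R hR
        simp only [δ, τ]
        rw [swap_map_insert a b R (hWa R hR) (hWb R hR), Equiv.swap_comm,
          swap_map_insert b a R (hWb R hR) (hWa R hR)]
        ring
      have hcast : ((V.card - 2 : ℕ) : ℝ) = V.card - 2 := by
        rw [Nat.cast_sub (by omega)]; norm_num
      have hmain : ∑ S ∈ ksub V (d + 1), ∑ T ∈ ksub V (d + 1),
          δ S * δ T * kw V.card k (S ∪ T).card =
          2 * (k * (V.card - k) / (V.card * (V.card - 1))) *
          ∑ R ∈ ksub W d, ∑ R' ∈ ksub W d,
            δ (insert a R) * δ (insert a R') * kw W.card (k - 1) (R ∪ R').card := by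
        rw [sum_ksub_pair V d a b ha hb hab _ (by
          intro S hS; simp [hδ0 S hS])]
        rw [mul_sum]
        apply sum_congr rfl
        intro R hR
        rw [sum_ksub_pair V d a b ha hb hab _ (by
          intro S hS; simp [hδ0 S hS]), sum_ksub_pair V d a b ha hb hab _ (by
          intro S hS; simp [hδ0 S hS]), mul_sum, ← sum_add_distrib]
        apply sum_congr rfl
        intro R' hR'
        have a1 := hWa R hR
        have a2 := hWa R' hR'
        have b1 := hWb R hR
        have b2 := hWb R' hR'
        have c1 : (insert a R ∪ insert a R').card = (R ∪ R').card + 1 := by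
          rw [insert_union, union_insert, insert_idem, card_insert_of_notMem (by simp [a1, a2])]
        have c2 : (insert b R ∪ insert b R').card = (R ∪ R').card + 1 := by
          rw [insert_union, union_insert, insert_idem, card_insert_of_notMem (by simp [b1, b2])]
        have c3 : (insert a R ∪ insert b R').card = (R ∪ R').card + 2 := by
          rw [insert_union, union_insert, card_insert_of_notMem (by simp [a1, a2, hab]),
            card_insert_of_notMem (by simp [b1, b2])]
        have c4 : (insert b R ∪ insert a R').card = (R ∪ R').card + 2 := by
          rw [insert_union, union_insert, card_insert_of_notMem (by simp [b1, b2, hab.symm]),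
            card_insert_of_notMem (by simp [a1, a2])]
        have hcu : (R ∪ R').card + 2 ≤ V.card := by
          have : (R ∪ R').card ≤ W.card := card_le_card (union_subset (mem_ksub.1 hR).1 (mem_ksub.1 hR').1)
          omega
        have := kw_diff V.card k _ hcu
        rw [c1, c2, c3, c4, hδb R hR, hδb R' hR', hWc]
        linear_combination (2 * δ (insert a R) * δ (insert a R')) * this
      have hpos : 0 ≤ ∑ S ∈ ksub V (d + 1), ∑ T ∈ ksub V (d + 1),
          δ S * δ T * kw V.card k (S ∪ T).card := by
        rw [hmain]
        have hVr : (2 : ℝ) ≤ V.card := by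
          have : 2 ≤ V.card := by omega
          exact_mod_cast this
        have hd0 : (0 : ℝ) ≤ d := by positivity
        apply mul_nonneg
        · apply mul_nonneg (by norm_num)
          apply div_nonneg
          · apply mul_nonneg <;> linarith
          · apply mul_nonneg <;> linarith
        · apply ih W (k - 1) (by omega) (by linarith) (by rw [hWc, hcast]; linarith)
            (fun R => δ (insert a R))
      rw [hq] at hpos
      have hs0 : ∑ S ∈ ksub V (d + 1), δ S ^ 2 = 0 := by
        have h0 : 0 ≤ ∑ S ∈ ksub V (d + 1), δ S ^ 2 := sum_nonneg fun _ _ => sq_nonneg _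
        nlinarith
      intro S hS
      have := (sum_eq_zero_iff_of_nonneg (fun _ _ => sq_nonneg _)).1 hs0 S hS
      have := pow_eq_zero_iff (two_ne_zero) |>.1 this
      simp only [δ, τ] at this
      linarith
    have hdep := dep_card V (d + 1) g hinv
    -- choose values by cardinality
    have hγ : ∃ γ : ℕ → ℝ, ∀ S ∈ ksub V (d + 1), g S = γ S.card := by
      classical
      refine ⟨fun j => if h : ∃ S ∈ ksub V (d + 1), S.card = j then g h.choose else 0, ?_⟩
      intro S hS
      have hex : ∃ S' ∈ ksub V (d + 1), S'.card = S.card := ⟨S, hS, rfl⟩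
      simp only [hex, dif_pos]
      exact hdep _ S hS _ hex.choose_spec.1 hex.choose_spec.2.symm rfl
    obtain ⟨γ, hγ⟩ := hγ
    choose A hA using sym_const V k
    have hsplit : ∀ F : Finset α → ℝ, ∑ T ∈ ksub V (d + 1), F T =
        ∑ j ∈ range (d + 2), ∑ T ∈ powersetCard j V, F T := by
      intro F
      rw [← sum_fiberwise_of_maps_to (s := ksub V (d + 1)) (t := range (d + 2)) (g := Finset.card)]
      · apply sum_congr rfl
        intro j hj
        apply sum_congr _ (fun _ _ => rfl)
        ext T
        simp only [mem_filter, mem_ksub, mem_powersetCard, mem_range] at hj ⊢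
        constructor
        · exact fun h => ⟨h.1.1, h.2⟩
        · exact fun h => ⟨⟨h.1, by omega⟩, h.2⟩
      · intro T hT
        have := (mem_ksub.1 hT).2
        exact mem_range.2 (by omega)
    set B := ∑ j ∈ range (d + 2), γ j * A j with hB
    have hMg : ∀ S ∈ ksub V (d + 1), ∑ T ∈ ksub V (d + 1), kw V.card k (S ∪ T).card * g T =
        B * kw V.card k S.card := by
      intro S hS
      rw [sum_congr rfl (fun T hT => by rw [hγ T hT]), hsplit, hB, sum_mul]
      apply sum_congr rfl
      intro j hj
      have hS' := mem_ksub.1 hS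
      rw [mem_range] at hj
      rw [mul_assoc, ← hA j S hS'.1 (by omega), mul_sum]
      apply sum_congr rfl
      intro T hT
      rw [(mem_powersetCard.1 hT).2, mul_comm]
    have h0 : (∅ : Finset α) ∈ ksub V (d + 1) := by simp [mem_ksub]
    have hB0 := hMg ∅ h0
    simp only [empty_union, card_empty, kw_zero, mul_one] at hB0
    have hfin : μ * ∑ S ∈ ksub V (d + 1), g S ^ 2 = B ^ 2 := by
      calc _ = ∑ S ∈ ksub V (d + 1), g S * (μ * g S) := by
            rw [mul_sum]; apply sum_congr rfl; intros; ring
        _ = ∑ S ∈ ksub V (d + 1), B * (kw V.card k S.card * g S) := by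
            apply sum_congr rfl
            intro S hS
            rw [← hg S hS, hMg S hS]; ring
        _ = _ := by rw [← mul_sum, hB0]; ring
    have hs0 : ∑ S ∈ ksub V (d + 1), g S ^ 2 = 0 := by
      have h0 : 0 ≤ ∑ S ∈ ksub V (d + 1), g S ^ 2 := sum_nonneg fun _ _ => sq_nonneg _
      nlinarith [sq_nonneg B]
    intro S hS
    have := (sum_eq_zero_iff_of_nonneg (fun _ _ => sq_nonneg _)).1 hs0 S hS
    exact pow_eq_zero_iff (two_ne_zero) |>.1 this

/-- The pseudo-expectation. -/
noncomputable def kL (n : ℕ) (k : ℝ) : MvPolynomial (Fin n) ℝ →ₗ[ℝ] ℝ :=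
  (MvPolynomial.basisMonomials (Fin n) ℝ).constr ℝ fun s => kw n k s.support.card

lemma kL_monomial (n : ℕ) (k : ℝ) (s : Fin n →₀ ℕ) (a : ℝ) :
    kL n k (monomial s a) = a * kw n k s.support.card := by
  have h : monomial s a = a • (MvPolynomial.basisMonomials (Fin n) ℝ s) := by
    simp [smul_monomial]
  rw [h, map_smul, kL, Module.Basis.constr_basis, smul_eq_mul]

lemma supp_add {n : ℕ} (s t : Fin n →₀ ℕ) : (s + t).support = s.support ∪ t.support := by
  ext x
  simp only [Finsupp.mem_support_iff, Finsupp.add_apply, mem_union]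
  omega

lemma kL_bool (n : ℕ) (k : ℝ) (i : Fin n) (f : MvPolynomial (Fin n) ℝ) :
    kL n k (f * (X i ^ 2 - X i)) = 0 := by
  induction f using MvPolynomial.induction_on' with
  | monomial s a =>
    rw [mul_sub, map_sub, X_pow_eq_monomial, X, monomial_mul, monomial_mul, kL_monomial,
      kL_monomial, supp_add, supp_add, Finsupp.support_single_ne_zero _ (by norm_num),
      Finsupp.support_single_ne_zero _ (by norm_num)]
    ring
  | add p q hp hq => rw [add_mul, map_add, hp, hq, add_zero]

lemma supp_card_le {n : ℕ} (f : MvPolynomial (Fin n) ℝ) (s : Fin n →₀ ℕ) (hs : s ∈ f.support) :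
    s.support.card ≤ f.totalDegree := by
  refine le_trans ?_ (le_totalDegree hs)
  rw [Finsupp.sum, card_eq_sum_ones]
  apply sum_le_sum
  intro i hi
  have := Finsupp.mem_support_iff.1 hi
  omega

lemma kL_sum (n : ℕ) (k : ℝ) (f : MvPolynomial (Fin n) ℝ) (hf : f.totalDegree < n) :
    kL n k (f * ((∑ i, X i) - C k)) = 0 := by
  conv_lhs => rw [f.as_sum]
  rw [sum_mul, map_sum]
  apply sum_eq_zero
  intro s hs
  have hc := (supp_card_le f s hs).trans_lt hf
  have h := sum_insert_kw (univ : Finset (Fin n)) s.support (subset_univ _) (by simpa using hc) k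
  rw [card_univ, Fintype.card_fin] at h
  rw [mul_sub, mul_sum, map_sub, map_sum, mul_comm _ (C k), C_mul_monomial, kL_monomial]
  have : ∀ i, kL n k (monomial s (coeff s f) * X i) =
      coeff s f * kw n k (insert i s.support).card := by
    intro i
    rw [X, monomial_mul, kL_monomial, supp_add, Finsupp.support_single_ne_zero _ (by norm_num),
      union_comm, ← insert_eq, mul_one]
  simp only [this]
  rw [← mul_sum, h]
  ring

lemma kL_sq (n : ℕ) (k : ℝ) (d : ℕ) (h2 : 2 * d ≤ n) (hk1 : (d : ℝ) - 1 < k)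
    (hk2 : k < n - d + 1) (g : MvPolynomial (Fin n) ℝ) (hg : g.totalDegree ≤ d) :
    0 ≤ kL n k (g ^ 2) := by
  have h := kw_psd d (univ : Finset (Fin n)) k (by simpa using h2) hk1 (by simpa using hk2)
    (fun S => ∑ s ∈ g.support with s.support = S, coeff s g)
  rw [card_univ, Fintype.card_fin] at h
  have hm : ∀ s ∈ g.support, s.support ∈ ksub (univ : Finset (Fin n)) d := fun s hs =>
    mem_ksub.2 ⟨subset_univ _, (supp_card_le g s hs).trans hg⟩
  convert h using 1
  have e : kL n k (g ^ 2) = ∑ s ∈ g.support, ∑ t ∈ g.support,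
      coeff s g * coeff t g * kw n k (s.support ∪ t.support).card := by
    conv_lhs => rw [sq, g.as_sum]
    rw [sum_mul_sum, map_sum]
    apply sum_congr rfl
    intro s _
    rw [map_sum]
    apply sum_congr rfl
    intro t _
    rw [monomial_mul, kL_monomial, supp_add]
  rw [e, ← sum_fiberwise_of_maps_to hm]
  apply sum_congr rfl
  intro S _
  simp only [sum_mul, mul_sum]
  rw [sum_comm]
  rw [← sum_fiberwise_of_maps_to hm]
  apply sum_congr rfl
  intro T _
  apply sum_congr rfl
  intro s hs
  apply sum_congr rfl
  intro t ht
  simp only [mem_filter] at hs ht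
  rw [hs.2, ht.2]

theorem knapsack_degree_sos_lower_bound (n : ℕ) (hn : 0 < n) (k : ℝ)
    (hk0 : 0 ≤ k) (hkn : k ≤ n) (hknotint : ∀ z : ℤ, k ≠ z) :
    ¬ ∃ (f : Fin n → MvPolynomial (Fin n) ℝ) (f0 : MvPolynomial (Fin n) ℝ)
        (m : ℕ) (g : Fin m → MvPolynomial (Fin n) ℝ),
      (∀ i, (f i).totalDegree ≤ min (2 * (⌊min k ((n : ℝ) - k)⌋).toNat + 3) n - 2) ∧
      f0.totalDegree ≤ min (2 * (⌊min k ((n : ℝ) - k)⌋).toNat + 3) n - 1 ∧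
      (∀ j, 2 * (g j).totalDegree ≤ min (2 * (⌊min k ((n : ℝ) - k)⌋).toNat + 3) n) ∧
      (-1 : MvPolynomial (Fin n) ℝ) =
        (∑ i, f i * (X i ^ 2 - X i)) + f0 * ((∑ i, X i) - C k) +
        ∑ j, (g j) ^ 2 := by
  rintro ⟨f, f0, m, g, -, hf0, hg, heq⟩
  set r := (⌊min k ((n : ℝ) - k)⌋).toNat with hr
  have hmin0 : 0 ≤ min k ((n : ℝ) - k) := le_min hk0 (by linarith)
  have hrz : ((r : ℤ)) = ⌊min k ((n : ℝ) - k)⌋ := Int.toNat_of_nonneg (Int.floor_nonneg.2 hmin0)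
  have hrle : (r : ℝ) ≤ min k ((n : ℝ) - k) := by
    have := Int.floor_le (min k ((n : ℝ) - k))
    rw [← hrz] at this
    exact_mod_cast this
  have hr1 : (r : ℝ) < k := lt_of_le_of_ne (hrle.trans (min_le_left _ _)) (fun h =>
    hknotint r (by rw [← h]; simp))
  have hr2 : (r : ℝ) < n - k := lt_of_le_of_ne (hrle.trans (min_le_right _ _)) (fun h =>
    hknotint (n - r) (by push_cast; linarith))
  have h := congrArg (kL n k) heq
  rw [map_add, map_add, map_sum, map_sum, kL_sum n k f0 (by omega)] at h
  simp only [kL_bool, sum_const_zero, zero_add] at h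
  have hneg : kL n k (-1) = -1 := by
    rw [map_neg, ← C_1, C_apply, kL_monomial]
    simp [kw_zero]
  rw [hneg] at h
  have hpos : 0 ≤ ∑ j, kL n k (g j ^ 2) := by
    apply sum_nonneg
    intro j _
    have hj := hg j
    have hd : (g j).totalDegree ≤ r + 1 := by omega
    have hd' : ((g j).totalDegree : ℝ) ≤ r + 1 := by exact_mod_cast hd
    exact kL_sq n k (g j).totalDegree (by omega) (by linarith) (by linarith) (g j) le_rfl
  linarith
end

section
/- Let G be a simple graph on n ≥ 2 vertices with m edges and let ρ = m / C(n,2) be its edge density. Then the number of triangles (3-cliques) of G is at least C(n,3) − (n(n−1)(1−ρ)/6)·((1+2ρ)n − 2 − 2ρ). -/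
open Finset

lemma triples_le {n : ℕ} (G : SimpleGraph (Fin n)) [DecidableRel G.Adj] :
    (univ.filter (fun p : Fin n × Fin n × Fin n =>
      G.Adj p.1 p.2.1 ∧ G.Adj p.1 p.2.2 ∧ G.Adj p.2.1 p.2.2)).card
      ≤ 6 * (G.cliqueFinset 3).card := by
  refine Finset.card_le_mul_card_image_of_maps_to
    (f := fun p : Fin n × Fin n × Fin n => ({p.1, p.2.1, p.2.2} : Finset (Fin n))) ?_ 6 ?_
  · rintro ⟨u, v, w⟩ h
    simp only [mem_filter, mem_univ, true_and] at h
    simp only [SimpleGraph.mem_cliqueFinset_iff]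
    exact SimpleGraph.is3Clique_triple_iff.2 h
  · intro s hs
    rw [SimpleGraph.mem_cliqueFinset_iff, SimpleGraph.is3Clique_iff] at hs
    obtain ⟨a, b, c, hab, hac, hbc, rfl⟩ := hs
    refine le_trans (Finset.card_le_card (t := {(a,b,c),(a,c,b),(b,a,c),(b,c,a),(c,a,b),(c,b,a)}) ?_)
      Finset.card_le_six
    rintro ⟨u, v, w⟩ h
    simp only [mem_filter, mem_univ, true_and] at h
    obtain ⟨⟨h1, h2, h3⟩, h4⟩ := h
    have hu : u ∈ ({a, b, c} : Finset (Fin n)) := by rw [← h4]; simp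
    have hv : v ∈ ({a, b, c} : Finset (Fin n)) := by rw [← h4]; simp
    have hw : w ∈ ({a, b, c} : Finset (Fin n)) := by rw [← h4]; simp
    have := h1.ne
    have := h2.ne
    have := h3.ne
    simp only [mem_insert, mem_singleton, Prod.mk.injEq] at hu hv hw ⊢
    clear h4 h1 h2 h3
    grind

theorem goodman_bound (n : ℕ) (hn : 2 ≤ n) (G : SimpleGraph (Fin n))
    [DecidableRel G.Adj] (m ρ : ℝ) (hm : m = (G.edgeFinset.card : ℝ))
    (hρ : ρ = m / (n.choose 2 : ℝ)) :
    ((G.cliqueFinset 3).card : ℝ) ≥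
      (n.choose 3 : ℝ) -
        ((n : ℝ) * ((n : ℝ) - 1) * (1 - ρ) / 6) * ((1 + 2 * ρ) * (n : ℝ) - 2 - 2 * ρ) := by
  have hT := triples_le G
  set t := (G.cliqueFinset 3).card
  let a : Fin n → Fin n → ℝ := fun u v => if G.Adj u v then 1 else 0
  let d : Fin n → ℝ := fun u => (G.degree u : ℝ)
  have hd : ∀ u, ∑ v, a u v = d u := by
    intro u
    simp only [a, d, Finset.sum_boole, ← SimpleGraph.card_neighborFinset_eq_degree,
      SimpleGraph.neighborFinset_eq_filter]
  have hsym : ∀ u v, a u v = a v u := by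
    intro u v
    simp only [a, G.adj_comm]
  have hdeg : ∑ u, d u = 2 * m := by
    rw [hm]
    simp only [d]
    exact_mod_cast G.sum_degrees_eq_twice_card_edges
  have hcard : ∑ u, ∑ v, ∑ w, a u v * a u w * a v w ≤ 6 * (t : ℝ) := by
    have hT' := (Nat.cast_le (α := ℝ)).2 hT
    rw [Nat.cast_mul, Nat.cast_ofNat] at hT'
    refine le_trans (le_of_eq ?_) hT'
    rw [Finset.card_filter]
    push_cast
    rw [Fintype.sum_prod_type]
    refine Finset.sum_congr rfl fun u _ => ?_
    rw [Fintype.sum_prod_type]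
    refine Finset.sum_congr rfl fun v _ => Finset.sum_congr rfl fun w _ => ?_
    simp only [a]
    split_ifs <;> simp_all
  have hpt : ∑ u, ∑ v, ∑ w, (a u v * a u w + a v u * a v w - a u v)
      ≤ ∑ u, ∑ v, ∑ w, a u v * a u w * a v w := by
    refine Finset.sum_le_sum fun u _ => Finset.sum_le_sum fun v _ =>
      Finset.sum_le_sum fun w _ => ?_
    rw [hsym v u]
    simp only [a]
    split_ifs <;> norm_num
  have hsum : ∑ u, ∑ v, ∑ w, (a u v * a u w + a v u * a v w - a u v)
      = 2 * ∑ u, d u ^ 2 - n * (2 * m) := by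
    have e1 : ∑ u, ∑ v, ∑ w, a u v * a u w = ∑ u, d u ^ 2 := by
      refine Finset.sum_congr rfl fun u _ => ?_
      simp only [← Finset.mul_sum, hd, ← Finset.sum_mul]
      ring
    have e2 : ∑ u, ∑ v, ∑ w, a v u * a v w = ∑ u, d u ^ 2 := by
      rw [Finset.sum_comm]
      exact e1
    have e3 : ∑ u, ∑ v, ∑ _w : Fin n, a u v = n * (2 * m) := by
      simp only [Finset.sum_const, Finset.card_univ, Fintype.card_fin, nsmul_eq_mul,
        ← Finset.mul_sum, hd, hdeg]
    simp only [Finset.sum_sub_distrib, Finset.sum_add_distrib]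
    rw [e1, e2, e3]
    ring
  have hcs : (2 * m) ^ 2 ≤ n * ∑ u, d u ^ 2 := by
    have := sq_sum_le_card_mul_sum_sq (s := (univ : Finset (Fin n))) (f := d)
    rw [hdeg] at this
    simpa using this
  have hn' : (2 : ℝ) ≤ n := by exact_mod_cast hn
  have hc3 : (n.choose 3 : ℝ) = n * (n - 1) * (n - 2) / 6 := by
    rw [Nat.cast_choose_eq_descPochhammer_div]
    simp [descPochhammer_succ_right, Nat.factorial]
  rw [Nat.cast_choose_two] at hρ
  have hm2 : m = ρ * (n * (n - 1) / 2) := by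
    rw [hρ]
    have : (n : ℝ) - 1 ≠ 0 := by linarith
    field_simp
  rw [hc3]
  have key : m * (4 * m - n ^ 2) ≤ 3 * n * t := by
    nlinarith
  have e : (n * (n - 1) * (n - 2) / 6 : ℝ) -
        ((n : ℝ) * ((n : ℝ) - 1) * (1 - ρ) / 6) * ((1 + 2 * ρ) * (n : ℝ) - 2 - 2 * ρ)
        = m * (4 * m - n ^ 2) / (3 * n) := by
    rw [hm2]
    field_simp
    ring
  rw [e, ge_iff_le, div_le_iff₀ (by linarith)]
  linarith
end

section
/- Let G be a simple graph on n ≥ 2 vertices with m edges, let ρ = m / C(n,2) be its edge density, and let k > 0 be the real number determined by n/k − 1 = (1−ρ)(n−1). Then the number of triangles (3-cliques) of G is at least (1/6)·n·(n − n/k)·(n − 2n/k). -/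
open Finset

lemma ordered_triangles_le (n : ℕ) (G : SimpleGraph (Fin n)) [DecidableRel G.Adj] :
    #{p : Fin n × Fin n × Fin n | G.Adj p.1 p.2.1 ∧ G.Adj p.1 p.2.2 ∧ G.Adj p.2.1 p.2.2}
      ≤ 6 * #(G.cliqueFinset 3) := by
  apply Finset.card_le_mul_card_image_of_maps_to
    (f := fun p : Fin n × Fin n × Fin n => ({p.1, p.2.1, p.2.2} : Finset (Fin n)))
  · rintro ⟨u, v, w⟩ h
    simp only [mem_filter, mem_univ, true_and] at h
    rw [SimpleGraph.mem_cliqueFinset_iff]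
    exact SimpleGraph.is3Clique_triple_iff.2 h
  · intro b hb
    rw [SimpleGraph.mem_cliqueFinset_iff, SimpleGraph.is3Clique_iff] at hb
    obtain ⟨x, y, z, hxy, hxz, hyz, rfl⟩ := hb
    refine (Finset.card_le_card (t := {(x,y,z),(x,z,y),(y,x,z),(y,z,x),(z,x,y),(z,y,x)}) ?_).trans
      Finset.card_le_six
    rintro ⟨u, v, w⟩ h
    simp only [mem_filter, mem_univ, true_and] at h
    obtain ⟨⟨h1, h2, h3⟩, h4⟩ := h
    have e1 := h1.ne
    have e2 := h2.ne
    have e3 := h3.ne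
    have hu : u ∈ ({x, y, z} : Finset (Fin n)) := by rw [← h4]; simp
    have hv : v ∈ ({x, y, z} : Finset (Fin n)) := by rw [← h4]; simp
    have hw : w ∈ ({x, y, z} : Finset (Fin n)) := by rw [← h4]; simp
    simp only [mem_insert, mem_singleton, Prod.mk.injEq] at hu hv hw ⊢
    clear h4 h1 h2 h3
    rcases hu with rfl | rfl | rfl <;> rcases hv with rfl | rfl | rfl <;>
      rcases hw with rfl | rfl | rfl <;> simp_all

lemma goodman_degree_bound (n : ℕ) (G : SimpleGraph (Fin n)) [DecidableRel G.Adj] :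
    2 * ∑ v, (G.degree v : ℝ) ^ 2 - n * ∑ v, (G.degree v : ℝ) ≤ 6 * (#(G.cliqueFinset 3) : ℝ) := by
  let a : Fin n → Fin n → ℝ := fun u v => if G.Adj u v then 1 else 0
  have hd : ∀ u, ∑ v, a u v = G.degree u := by
    intro u
    simp [a, ← SimpleGraph.card_neighborFinset_eq_degree, SimpleGraph.neighborFinset_eq_filter]
  have hs : ∀ u v, a u v = a v u := by
    intro u v
    simp [a, G.adj_comm]
  have h1 : ∑ u, ∑ v, ∑ w, a u v * a u w * a v w ≤ 6 * (#(G.cliqueFinset 3) : ℝ) := by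
    have h := ordered_triangles_le n G
    have h' : (#{p : Fin n × Fin n × Fin n | G.Adj p.1 p.2.1 ∧ G.Adj p.1 p.2.2 ∧ G.Adj p.2.1 p.2.2} : ℝ)
      ≤ 6 * #(G.cliqueFinset 3) := by exact_mod_cast h
    refine le_trans (le_of_eq ?_) h'
    rw [Finset.card_filter]
    push_cast
    rw [Fintype.sum_prod_type]
    refine Finset.sum_congr rfl fun u _ => ?_
    rw [Fintype.sum_prod_type]
    refine Finset.sum_congr rfl fun v _ => Finset.sum_congr rfl fun w _ => ?_
    by_cases h1 : G.Adj u v <;> by_cases h2 : G.Adj u w <;> by_cases h3 : G.Adj v w <;>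
      simp [a, h1, h2, h3]
  have h2 : ∑ u, ∑ v, ∑ w, (a u v * a u w + a u v * a v w - a u v)
      ≤ ∑ u, ∑ v, ∑ w, a u v * a u w * a v w := by
    refine Finset.sum_le_sum fun u _ => Finset.sum_le_sum fun v _ => Finset.sum_le_sum fun w _ => ?_
    by_cases h1 : G.Adj u v <;> by_cases h2 : G.Adj u w <;> by_cases h3 : G.Adj v w <;>
      simp [a, h1, h2, h3]
  have e1 : ∑ u, ∑ v, ∑ w, a u v * a u w = ∑ v, (G.degree v : ℝ) ^ 2 := by
    refine Finset.sum_congr rfl fun u _ => ?_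
    simp_rw [← Finset.mul_sum, hd, ← Finset.sum_mul, hd, sq]
  have e2 : ∑ u, ∑ v, ∑ w, a u v * a v w = ∑ v, (G.degree v : ℝ) ^ 2 := by
    rw [Finset.sum_comm, ← e1]
    refine Finset.sum_congr rfl fun u _ => Finset.sum_congr rfl fun v _ =>
      Finset.sum_congr rfl fun w _ => ?_
    rw [hs v u]
  have e3 : ∑ u, ∑ v, ∑ _w : Fin n, a u v = n * ∑ v, (G.degree v : ℝ) := by
    simp only [Finset.sum_const, Finset.card_univ, Fintype.card_fin, nsmul_eq_mul,
      ← Finset.mul_sum, hd]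
  simp only [Finset.sum_sub_distrib, Finset.sum_add_distrib, e1, e2, e3] at h2
  linarith

theorem goodman_bound_independent_sets_form (n : ℕ) (hn : 2 ≤ n)
    (G : SimpleGraph (Fin n)) [DecidableRel G.Adj] (m ρ k : ℝ)
    (hm : m = (G.edgeFinset.card : ℝ)) (hρ : ρ = m / (n.choose 2 : ℝ))
    (hk : 0 < k) (hkdef : (n : ℝ) / k - 1 = (1 - ρ) * ((n : ℝ) - 1)) :
    ((G.cliqueFinset 3).card : ℝ) ≥
      (1 / 6) * (n : ℝ) * ((n : ℝ) - (n : ℝ) / k) * ((n : ℝ) - 2 * ((n : ℝ) / k)) := by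
  have hb := goodman_degree_bound n G
  have hn' : (2 : ℝ) ≤ n := by exact_mod_cast hn
  have hdeg : ∑ v, (G.degree v : ℝ) = 2 * m := by
    rw [hm]
    exact_mod_cast G.sum_degrees_eq_twice_card_edges
  have hcs : (∑ v, (G.degree v : ℝ)) ^ 2 ≤ n * ∑ v, (G.degree v : ℝ) ^ 2 := by
    simpa using sq_sum_le_card_mul_sum_sq (s := (Finset.univ : Finset (Fin n)))
      (f := fun v => (G.degree v : ℝ))
  rw [hdeg] at hb hcs
  set x := (n : ℝ) / k with hx
  have hn1 : (n : ℝ) - 1 ≠ 0 := by linarith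
  have hn0 : (n : ℝ) ≠ 0 := by linarith
  have hmx : 2 * m = n * (n - x) := by
    have : ρ * (n - 1) * n = 2 * m := by
      rw [hρ, Nat.cast_choose_two]
      field_simp
    rw [← this]
    linear_combination (n : ℝ) * hkdef
  rw [hmx] at hb hcs
  have hc2 : n * (n - x) ^ 2 ≤ ∑ v, (G.degree v : ℝ) ^ 2 := by
    refine le_of_mul_le_mul_left ?_ (show (0 : ℝ) < n by linarith)
    linarith
  linarith
end

section
/- Let G be a simple graph on n vertices with m edges, let N_{3,3} be its number of triangles, let N_{3,1} be the number of 3-element vertex sets inducing exactly one edge, and for each vertex i let P_i be the number of unordered pairs {j,k} of vertices distinct from i such that neither {i,j} nor {i,k} is an edge of G. Then N_{3,3} = C(n,3) − (n−2)·(C(n,2) − m) + (2/3)·Σ_{i} P_i + N_{3,1}/3. -/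
open Finset

/-- The number of edges of `G` inside the vertex set `S`. -/
def edgesIn {n : ℕ} (G : SimpleGraph (Fin n)) [DecidableRel G.Adj]
    (S : Finset (Fin n)) : ℕ :=
  (G.edgeFinset.filter (· ∈ S.sym2)).card

/-- `N3 G t` is the number of 3-element vertex sets whose induced subgraph has
exactly `t` edges. -/
def N3 {n : ℕ} (G : SimpleGraph (Fin n)) [DecidableRel G.Adj] (t : ℕ) : ℕ :=
  (univ.filter fun S : Finset (Fin n) => S.card = 3 ∧ edgesIn G S = t).card

/-- `P G i` is the number of unordered pairs `{j,k}` of vertices distinct from `i` such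
that neither `{i,j}` nor `{i,k}` is an edge of `G`. -/
def P {n : ℕ} (G : SimpleGraph (Fin n)) [DecidableRel G.Adj] (i : Fin n) : ℕ :=
  (univ.filter fun p : Finset (Fin n) =>
    p.card = 2 ∧ i ∉ p ∧ ∀ j ∈ p, ¬ G.Adj i j).card

theorem card_supersets {n : ℕ} (a b : Fin n) (hab : a ≠ b) :
    ((univ.powersetCard 3).filter fun S : Finset (Fin n) => a ∈ S ∧ b ∈ S).card = n - 2 := by
  have h : ((univ : Finset (Fin n)) \ {a, b}).card = n - 2 := by
    rw [card_sdiff_of_subset (subset_univ _), card_pair hab]; simp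
  rw [← h]
  symm
  refine card_bij (fun c _ => {a, b, c}) ?_ ?_ ?_
  · intro c hc
    simp at hc
    simp only [mem_filter, mem_powersetCard_univ]
    refine ⟨card_eq_three.2 ⟨a, b, c, hab, ?_, ?_, rfl⟩, by simp, by simp⟩ <;> grind
  · intro c hc d hd h
    have : c ∈ ({a, b, d} : Finset (Fin n)) := by rw [← h]; simp
    simp at hc hd this
    grind
  · intro S hS
    simp only [mem_filter, mem_powersetCard_univ] at hS
    obtain ⟨h3, ha, hb⟩ := hS
    have h1 : (S \ {a, b}).card = 1 := by
      rw [card_sdiff_of_subset (by grind), card_pair hab, h3]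
    obtain ⟨c, hc⟩ := card_eq_one.1 h1
    refine ⟨c, ?_, ?_⟩
    · have : c ∈ S \ {a, b} := by rw [hc]; simp
      grind
    · ext x
      have := congrArg (x ∈ ·) hc
      grind

theorem sum_edgesIn {n : ℕ} (G : SimpleGraph (Fin n)) [DecidableRel G.Adj] :
    ∑ S ∈ univ.powersetCard 3, edgesIn G S = G.edgeFinset.card * (n - 2) := by
  unfold edgesIn
  rw [← smul_eq_mul, ← sum_const]
  have := sum_card_bipartiteAbove_eq_sum_card_bipartiteBelow
    (s := (univ : Finset (Fin n)).powersetCard 3) (t := G.edgeFinset) (fun S e => e ∈ S.sym2)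
  unfold bipartiteAbove bipartiteBelow at this
  rw [this]
  refine sum_congr rfl fun e he => ?_
  induction e with
  | _ a b =>
    have hab : a ≠ b := by
      have : G.Adj a b := by simpa using he
      exact this.ne
    rw [← card_supersets a b hab]
    simp [mk_mem_sym2_iff]

theorem P_eq {n : ℕ} (G : SimpleGraph (Fin n)) [DecidableRel G.Adj] (i : Fin n) :
    P G i = ((univ.powersetCard 3).filter
      fun S : Finset (Fin n) => i ∈ S ∧ ∀ j ∈ S, ¬ G.Adj i j).card := by
  unfold P
  refine card_bij (fun p _ => insert i p) ?_ ?_ ?_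
  · intro p hp
    simp at hp
    simp [card_insert_of_notMem hp.2.1, hp.1]
    exact hp.2.2
  · intro p hp q hq h
    simp at hp hq
    rw [← erase_insert hp.2.1, h, erase_insert hq.2.1]
  · intro S hS
    simp at hS
    refine ⟨S.erase i, ?_, insert_erase hS.2.1⟩
    simp [card_erase_of_mem hS.2.1, hS.1]
    exact fun j _ hj => hS.2.2 j hj

theorem sum_P {n : ℕ} (G : SimpleGraph (Fin n)) [DecidableRel G.Adj] :
    ∑ i, P G i = ∑ S ∈ (univ : Finset (Fin n)).powersetCard 3,
      (S.filter fun i => ∀ j ∈ S, ¬ G.Adj i j).card := by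
  simp_rw [P_eq]
  have := sum_card_bipartiteAbove_eq_sum_card_bipartiteBelow
    (s := (univ : Finset (Fin n))) (t := (univ : Finset (Fin n)).powersetCard 3)
    (fun i S => i ∈ S ∧ ∀ j ∈ S, ¬ G.Adj i j)
  unfold bipartiteAbove bipartiteBelow at this
  rw [this]
  refine sum_congr rfl fun S _ => ?_
  congr 1
  ext i
  simp

theorem edgesIn_triple {n : ℕ} (G : SimpleGraph (Fin n)) [DecidableRel G.Adj]
    (a b c : Fin n) (hab : a ≠ b) (hac : a ≠ c) (hbc : b ≠ c) :
    edgesIn G {a, b, c} = (if G.Adj a b then 1 else 0) + (if G.Adj a c then 1 else 0) +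
      (if G.Adj b c then 1 else 0) := by
  unfold edgesIn
  have : (G.edgeFinset.filter (· ∈ ({a, b, c} : Finset (Fin n)).sym2)) =
      ({s(a, b), s(a, c), s(b, c)} : Finset (Sym2 (Fin n))).filter (· ∈ G.edgeSet) := by
    ext e
    induction e with
    | _ x y =>
      have h1 := G.ne_of_adj (a := x) (b := y)
      simp only [mem_filter, SimpleGraph.mem_edgeFinset, SimpleGraph.mem_edgeSet,
        mk_mem_sym2_iff, mem_insert, mem_singleton, Sym2.eq_iff]
      grind
  rw [this]
  simp only [filter_insert, filter_singleton, SimpleGraph.mem_edgeSet]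
  have e1 : s(a, b) ≠ s(a, c) := by simp [hbc, hab, hac]
  have e2 : s(a, b) ≠ s(b, c) := by simp [hbc, hab, hac]
  have e3 : s(a, c) ≠ s(b, c) := by simp [hbc, hab, hac]
  split_ifs <;> simp_all

theorem pointwise {n : ℕ} (G : SimpleGraph (Fin n)) [DecidableRel G.Adj]
    (S : Finset (Fin n)) (hS : S.card = 3) :
    3 * (if edgesIn G S = 3 then 1 else 0) + 6 = 3 * edgesIn G S +
      2 * (S.filter fun i => ∀ j ∈ S, ¬ G.Adj i j).card +
      (if edgesIn G S = 1 then 1 else 0) := by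
  obtain ⟨a, b, c, hab, hac, hbc, rfl⟩ := card_eq_three.1 hS
  rw [edgesIn_triple G a b c hab hac hbc]
  simp only [filter_insert, filter_singleton, forall_mem_insert, mem_singleton, forall_eq,
    SimpleGraph.irrefl, not_false_eq_true, true_and, and_true,
    G.adj_comm b a, G.adj_comm c a, G.adj_comm c b]
  by_cases h1 : G.Adj a b <;> by_cases h2 : G.Adj a c <;> by_cases h3 : G.Adj b c <;>
    simp [h1, h2, h3, hab, hac, hbc]

theorem N3_eq {n : ℕ} (G : SimpleGraph (Fin n)) [DecidableRel G.Adj] (t : ℕ) :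
    N3 G t = ∑ S ∈ (univ : Finset (Fin n)).powersetCard 3,
      (if edgesIn G S = t then 1 else 0) := by
  rw [← card_filter]
  unfold N3
  congr 1
  ext S
  simp

theorem triangle_count_identity (n : ℕ) (G : SimpleGraph (Fin n))
    [DecidableRel G.Adj] :
    (N3 G 3 : ℝ) =
      (n.choose 3 : ℝ) - ((n : ℝ) - 2) * ((n.choose 2 : ℝ) - (G.edgeFinset.card : ℝ)) +
        (2 / 3) * (∑ i, (P G i : ℝ)) + (N3 G 1 : ℝ) / 3 := by
  have key : 3 * N3 G 3 + n.choose 3 * 6 =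
      3 * (G.edgeFinset.card * (n - 2)) + 2 * ∑ i, P G i + N3 G 1 := by
    rw [N3_eq, N3_eq, sum_P, ← sum_edgesIn, mul_sum, mul_sum, mul_sum, ← sum_add_distrib,
      ← sum_add_distrib]
    rw [← sum_congr rfl fun S hS => pointwise G S (mem_powersetCard_univ.1 hS),
      sum_add_distrib, sum_const, card_powersetCard]
    simp
  have hc : n.choose 3 * 3 = n.choose 2 * (n - 2) := Nat.choose_succ_right_eq n 2
  have hm : G.edgeFinset.card ≤ n.choose 2 := by
    simpa using G.card_edgeFinset_le_card_choose_two
  have key' : (3 * N3 G 3 + n.choose 3 * 6 : ℝ) =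
      3 * (G.edgeFinset.card * ((n - 2 : ℕ) : ℝ)) + 2 * ∑ i, (P G i : ℝ) + N3 G 1 := by
    exact_mod_cast key
  have hc' : (n.choose 3 * 3 : ℝ) = n.choose 2 * ((n - 2 : ℕ) : ℝ) := by exact_mod_cast hc
  rcases le_or_gt 2 n with h | h
  · rw [Nat.cast_sub h] at key' hc'
    push_cast at key' hc'
    linarith
  · have h2 : n.choose 2 = 0 := Nat.choose_eq_zero_of_lt h
    have h3 : n.choose 3 = 0 := Nat.choose_eq_zero_of_lt (by omega)
    have h4 : G.edgeFinset.card = 0 := by omega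
    rw [h3, h4] at key'
    rw [h2, h3, h4]
    push_cast at key' ⊢
    linarith
end

section
/- Let m and z be positive integers and let p ∈ ℝ[α₁, …, α_m] be a polynomial of total degree strictly less than z. Suppose there exist a finite set A₁ ⊆ ℝ with |A₁| ≥ z and, for each 1 ≤ j ≤ m−1, a function A_{j+1} assigning to every tuple (a₁, …, a_j) ∈ ℝʲ a finite set A_{j+1}(a₁, …, a_j) ⊆ ℝ with |A_{j+1}(a₁, …, a_j)| ≥ z, such that p(a₁, …, a_m) = 0 for every tuple (a₁, …, a_m) with a₁ ∈ A₁ and a_{j+1} ∈ A_{j+1}(a₁, …, a_j) for all 1 ≤ j ≤ m−1. Then p is the zero polynomial. -/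
open MvPolynomial Finset

theorem branching_aux (z : ℕ) (m : ℕ) :
    ∀ (p : MvPolynomial (Fin m) ℝ) (_ : p.totalDegree < z)
    (A : (j : Fin m) → ((Fin (j : ℕ)) → ℝ) → Finset ℝ)
    (_ : ∀ (j : Fin m) (prev : (Fin (j : ℕ)) → ℝ), z ≤ (A j prev).card)
    (_ : ∀ a : Fin m → ℝ,
      (∀ j : Fin m, a j ∈ A j (fun i => a (Fin.castLE j.isLt.le i))) →
      eval a p = 0), p = 0 := by
  induction m with
  | zero =>
    intro p _ A _ hv
    have h := hv (fun i => i.elim0) (fun i => i.elim0)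
    rw [MvPolynomial.eq_C_of_isEmpty p] at h ⊢
    rw [eval_C] at h
    rw [h, C_0]
  | succ n ih =>
    intro p hdeg A hcard hv
    set q := rename (finRotate (n + 1)) p with hq
    have hqdeg : q.totalDegree < z := lt_of_le_of_lt (totalDegree_rename_le _ _) hdeg
    have hev : ∀ (s : Fin n → ℝ) (y : ℝ),
        Polynomial.eval y (Polynomial.map (eval s) (finSuccEquiv ℝ n q))
          = eval (Fin.snoc s y : Fin (n + 1) → ℝ) p := by
      intro s y
      rw [← eval_eq_eval_mv_eval', hq, eval_rename]
      congr 2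
      funext i
      refine Fin.lastCases ?_ (fun i => ?_) i
      · simp
      · simp [finRotate_succ_apply]
    have hcoeff : ∀ i, (finSuccEquiv ℝ n q).coeff i = 0 := by
      intro i
      by_contra hne
      have hd := totalDegree_coeff_finSuccEquiv_add_le q i hne
      refine hne (ih _ (by omega) (fun j prev => A j.castSucc prev)
        (fun j prev => hcard j.castSucc prev) ?_)
      intro s hs
      have hz : Polynomial.map (eval s) (finSuccEquiv ℝ n q) = 0 := by
        refine Polynomial.eq_zero_of_natDegree_lt_card_of_eval_eq_zero' _
          (A (Fin.last n) s) ?_ ?_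
        · intro y hy
          rw [hev]
          apply hv
          intro j
          refine Fin.lastCases ?_ (fun j => ?_) j
          · rw [Fin.snoc_last]
            convert hy using 2
            funext i
            exact Fin.snoc_castSucc (α := fun _ => ℝ) y s i
          · rw [Fin.snoc_castSucc]
            convert hs j using 2
            funext i
            exact Fin.snoc_castSucc (α := fun _ => ℝ) y s (Fin.castLE j.isLt.le i)
        · refine lt_of_lt_of_le ?_ (hcard (Fin.last n) s)
          refine lt_of_le_of_lt Polynomial.natDegree_map_le ?_
          rw [natDegree_finSuccEquiv]
          exact lt_of_le_of_lt (degreeOf_le_totalDegree _ _) hqdeg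
      have := congrArg (fun f => Polynomial.coeff f i) hz
      simpa using this
    have h0 : finSuccEquiv ℝ n q = 0 := Polynomial.ext (by simpa using hcoeff)
    have hq0 : q = 0 := by simpa using h0
    exact rename_injective _ (finRotate (n + 1)).injective (by rw [← hq, hq0, map_zero])

theorem branching_interpolation (m z : ℕ) (hm : 0 < m) (hz : 0 < z)
    (p : MvPolynomial (Fin m) ℝ) (hdeg : p.totalDegree < z)
    (A : (j : Fin m) → ((Fin (j : ℕ)) → ℝ) → Finset ℝ)
    (hcard : ∀ (j : Fin m) (prev : (Fin (j : ℕ)) → ℝ), z ≤ (A j prev).card)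
    (hvanish : ∀ a : Fin m → ℝ,
      (∀ j : Fin m, a j ∈ A j (fun i => a (Fin.castLE j.isLt.le i))) →
      eval a p = 0) :
    p = 0 := by
  exact branching_aux z m p hdeg A hcard hvanish
end

section
/- Let n and r be positive integers with n ≥ 2r. For injective tuples L = (l₁, …, l_r) and L'' = (l''₁, …, l''_r) of elements of {1, …, n}, define c(L, L'') = 0 if there exist indices i ≠ j with l''_j = l_i, and otherwise c(L, L'') = (−1)^z / Π_{j=0}^{z−1}(n − r − j) where z = |{i : l''_i ≠ l_i}|. Then for all injective tuples L and L' of length r and every position i ∈ {1, …, r}: Σ_a c(L, (l'₁, …, l'_{i−1}, a, l'_{i+1}, …, l'_r)) = 0, where the sum is over all a in ({1, …, n} ∖ {l'₁, …, l'_r}) ∪ {l'_i}. -/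
open Finset

/-- The coefficients `c(L, L'')` used in defining the symmetry-adjusted polynomials
`φ_{F,L}`: zero if `L''` hits an entry of `L` at a wrong position, and otherwise
`(−1)^z / ((n−r)(n−r−1)⋯(n−r−z+1))` where `z` is the number of positions where `L''`
differs from `L`. -/
noncomputable def cCoef (n r : ℕ) (L L'' : Fin r → Fin n) : ℝ :=
  if ∃ i j : Fin r, i ≠ j ∧ L'' j = L i then 0
  else
    (-1 : ℝ) ^ ((univ.filter fun i => L'' i ≠ L i).card) /
      ∏ j ∈ Finset.range ((univ.filter fun i => L'' i ≠ L i).card), ((n : ℝ) - r - j)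

theorem coefficient_sum_vanishes (n r : ℕ) (hr : 0 < r) (hn : 2 * r ≤ n)
    (L L' : Fin r → Fin n) (hL : Function.Injective L) (hL' : Function.Injective L')
    (i : Fin r) :
    ∑ a ∈ insert (L' i) (univ \ univ.image L'),
      cCoef n r L (Function.update L' i a) = 0 := by
  have hS : ∀ a, a ∈ insert (L' i) (univ \ univ.image L') ↔ ∀ j, j ≠ i → L' j ≠ a := by
    intro a
    simp only [mem_insert, mem_sdiff, mem_univ, true_and, mem_image, not_exists]
    constructor
    · rintro (rfl | h) j hj
      · exact fun h => hj (hL' h)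
      · exact h j
    · intro h
      by_cases ha : a = L' i
      · exact Or.inl ha
      · refine Or.inr fun j hj => ?_
        by_cases hji : j = i
        · subst hji; exact ha hj.symm
        · exact h j hji hj
  by_cases hbad : ∃ j, j ≠ i ∧ ∃ k, k ≠ j ∧ L' j = L k
  · obtain ⟨j, hj, k, hk, e⟩ := hbad
    refine Finset.sum_eq_zero fun a _ => ?_
    unfold cCoef
    rw [if_pos]
    exact ⟨k, j, hk, by rw [Function.update_of_ne hj, e]⟩
  · push Not at hbad
    set D : Finset (Fin r) := univ.filter fun j => j ≠ i ∧ L' j ≠ L j with hD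
    set B : Finset (Fin n) := univ \ (univ.image L ∪ D.image L') with hB
    have hDi : i ∉ D := by simp [hD]
    have hdisj : Disjoint (univ.image L) (D.image L') := by
      rw [Finset.disjoint_left]
      intro x hx hx'
      simp only [mem_image, mem_univ, true_and] at hx hx'
      obtain ⟨k, rfl⟩ := hx
      obtain ⟨j, hj, e⟩ := hx'
      simp only [hD, mem_filter, mem_univ, true_and] at hj
      by_cases hk : k = j
      · subst hk; exact hj.2 e
      · exact hbad j hj.1 k hk e
    have hDr : D.card < r := by
      have := Finset.card_lt_univ_of_notMem hDi
      simpa using this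
    have hBc : B.card + (r + D.card) = n := by
      have h1 : (univ.image L ∪ D.image L').card = r + D.card := by
        rw [Finset.card_union_of_disjoint hdisj, Finset.card_image_of_injective _ hL,
          Finset.card_image_of_injective _ hL']
        simp
      have h2 := Finset.card_sdiff_add_card_eq_card (Finset.subset_univ (univ.image L ∪ D.image L'))
      rw [h1] at h2
      simpa using h2
    have hLiB : L i ∉ B := by simp [hB]
    have hsub : insert (L i) B ⊆ insert (L' i) (univ \ univ.image L') := by
      intro a ha
      rw [hS]
      intro j hj e
      rcases mem_insert.1 ha with rfl | ha
      · exact hbad j hj i hj.symm e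
      · simp only [hB, mem_sdiff, mem_univ, true_and, mem_union, mem_image, not_or, not_exists,
          not_and] at ha
        by_cases hjD : j ∈ D
        · exact ha.2 j hjD e
        · have : L' j = L j := by
            by_contra h
            exact hjD (by simp [hD, hj, h])
          exact ha.1 j (this ▸ e)
    rw [← Finset.sum_subset hsub, Finset.sum_insert hLiB]
    · have h1 : cCoef n r L (Function.update L' i (L i)) =
          (-1 : ℝ) ^ D.card / ∏ j ∈ Finset.range D.card, ((n : ℝ) - r - j) := by
        have hf : (univ.filter fun j => Function.update L' i (L i) j ≠ L j) = D := by
          ext j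
          by_cases hj : j = i
          · subst hj; simp [hD]
          · simp [hD, hj]
        unfold cCoef
        rw [if_neg, hf]
        rintro ⟨k, j, hkj, e⟩
        by_cases hj : j = i
        · subst hj
          rw [Function.update_self] at e
          exact hkj (hL e).symm
        · rw [Function.update_of_ne hj] at e
          exact hbad j hj k hkj e
      have h2 : ∀ a ∈ B, cCoef n r L (Function.update L' i a) =
          (-1 : ℝ) ^ (D.card + 1) / ∏ j ∈ Finset.range (D.card + 1), ((n : ℝ) - r - j) := by
        intro a ha
        have haL : ∀ k, L k ≠ a := by
          intro k e
          simp [hB, ← e] at ha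
        have hf : (univ.filter fun j => Function.update L' i a j ≠ L j) = insert i D := by
          ext j
          by_cases hj : j = i
          · subst hj; simpa using (haL j).symm
          · simp [hD, hj]
        unfold cCoef
        rw [if_neg, hf, Finset.card_insert_of_notMem hDi]
        rintro ⟨k, j, hkj, e⟩
        by_cases hj : j = i
        · subst hj
          rw [Function.update_self] at e
          exact haL k e.symm
        · rw [Function.update_of_ne hj] at e
          exact hbad j hj k hkj e
      rw [h1, Finset.sum_congr rfl h2, Finset.sum_const, nsmul_eq_mul, Finset.prod_range_succ]
      have hb : (n : ℝ) - r - D.card = B.card := by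
        have h : ((B.card + (r + D.card) : ℕ) : ℝ) = (n : ℝ) := congrArg _ hBc
        push_cast at h
        linarith
      have hpos : (B.card : ℝ) ≠ 0 := by
        have : B.card ≠ 0 := by omega
        exact_mod_cast this
      have hp : ∏ j ∈ Finset.range D.card, ((n : ℝ) - r - j) ≠ 0 := by
        rw [Finset.prod_ne_zero_iff]
        intro j hj
        have hj := Finset.mem_range.1 hj
        have : (r : ℝ) + j < n := by
          have : r + j < n := by omega
          exact_mod_cast this
        intro h
        linarith
      rw [hb]
      field_simp
      ring
    · intro a ha hna
      rw [hS] at ha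
      unfold cCoef
      rw [if_pos]
      simp only [mem_insert, hB, mem_sdiff, mem_univ, true_and, not_or, not_not] at hna
      obtain ⟨hai, h⟩ := hna
      rcases mem_union.1 h with h | h
      · obtain ⟨k, -, rfl⟩ := mem_image.1 h
        exact ⟨k, i, fun h => hai (h ▸ rfl), by simp⟩
      · obtain ⟨j, hj, e⟩ := mem_image.1 h
        exact absurd e (ha j (fun h => hDi (h ▸ hj)))
end

section
/- Let n and r be positive integers with n ≥ 2r, and let M be the real matrix whose rows and columns are indexed by the permutations π of {1, …, r}, with entries M_{π,π'} = Σ_A 1 / Π_{j=0}^{|A|−1}(n − r − j), where the sum is over all subsets A of {1, …, r} containing {i : π(i) ≠ π'(i)} (and the empty product equals 1). Then M is positive definite. -/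
open Finset

/-- The change-of-basis matrix `M` indexed by permutations of `{1,…,r}`, with
`M_{π,π'} = Σ_A 1 / ((n−r)(n−r−1)⋯(n−r−|A|+1))`, the sum being over all subsets
`A ⊆ {1,…,r}` containing `{i : π i ≠ π' i}`. -/
noncomputable def Mmat (n r : ℕ) :
    Matrix (Equiv.Perm (Fin r)) (Equiv.Perm (Fin r)) ℝ :=
  fun π π' =>
    ∑ A ∈ univ.filter (fun A : Finset (Fin r) =>
        (univ.filter fun i => π i ≠ π' i) ⊆ A),
      1 / ∏ j ∈ Finset.range A.card, ((n : ℝ) - r - j)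

/-- The indicator matrix of the relation of agreeing outside `A`. -/
def agreeMat (r : ℕ) (A : Finset (Fin r)) :
    Matrix (Equiv.Perm (Fin r)) (Equiv.Perm (Fin r)) ℝ :=
  fun π π' => if (univ.filter fun i => π i ≠ π' i) ⊆ A then 1 else 0

theorem agreeMat_posSemidef (r : ℕ) (A : Finset (Fin r)) : (agreeMat r A).PosSemidef := by
  let B : Matrix ({i // i ∉ A} → Fin r) (Equiv.Perm (Fin r)) ℝ :=
    fun g π => if (fun i : {i // i ∉ A} => π i.1) = g then 1 else 0
  have h : agreeMat r A = B.conjTranspose * B := by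
    ext π π'
    have key : ((univ.filter fun i => π i ≠ π' i) ⊆ A) ↔
        (fun i : {i // i ∉ A} => π' i.1) = (fun i : {i // i ∉ A} => π i.1) := by
      constructor
      · intro h
        funext i
        by_contra hc
        exact i.2 (h (by simpa using fun e => hc e.symm))
      · intro h i hi
        by_contra hc
        have := congrFun h ⟨i, hc⟩
        simp at hi this
        exact hi this.symm
    rw [Matrix.mul_apply]
    simp only [agreeMat, Matrix.conjTranspose_apply, key]
    simp only [B]
    simp [eq_comm]
  rw [h]
  exact Matrix.posSemidef_conjTranspose_mul_self B

theorem agreeMat_empty (r : ℕ) : agreeMat r ∅ = 1 := by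
  ext π π'
  simp only [agreeMat, Matrix.one_apply]
  congr 1
  simp [Finset.filter_eq_empty_iff, Equiv.ext_iff]

theorem change_of_basis_matrix_posdef (n r : ℕ) (hr : 0 < r) (hn : 2 * r ≤ n) :
    (Mmat n r).PosDef := by
  have hM : Mmat n r = ∑ A : Finset (Fin r),
      (1 / ∏ j ∈ Finset.range A.card, ((n : ℝ) - r - j)) • agreeMat r A := by
    ext π π'
    simp only [Mmat, Matrix.sum_apply, Matrix.smul_apply, agreeMat, smul_eq_mul, mul_ite,
      mul_one, mul_zero, Finset.sum_filter]
  rw [hM, ← Finset.add_sum_erase _ _ (mem_univ (∅ : Finset (Fin r))), agreeMat_empty]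
  apply Matrix.PosDef.add_posSemidef
  · simpa using Matrix.PosDef.one
  · apply Matrix.posSemidef_sum
    intro A _
    apply (agreeMat_posSemidef r A).smul
    apply div_nonneg zero_le_one
    apply Finset.prod_nonneg
    intro j hj
    have h1 : A.card ≤ r := by simpa using Finset.card_le_univ A
    have h2 : j < A.card := by simpa using hj
    have h3 : r + j ≤ n := by omega
    have h4 : (r : ℝ) + j ≤ n := by exact_mod_cast h3
    linarith
end

section
/- Let n and r be positive integers with r ≤ n, and let b be a real-valued function on the injective tuples of length r of elements of {1, …, n}. Suppose that for every injective tuple J = (j₁, …, j_r) and every position i ∈ {1, …, r}, Σ_a b(j₁, …, j_{i−1}, a, j_{i+1}, …, j_r) = 0, where the sum is over all a ∈ {1, …, n} ∖ {j₁, …, j_{i−1}, j_{i+1}, …, j_r}. Then for every injective tuple L = (l₁, …, l_r), every subset A ⊆ {1, …, r}, and every bijection π₀ of {1, …, r} ∖ A onto itself: Σ b(j₁, …, j_r) = (−1)^{|A|} · Σ_{π} b(l_{π(1)}, …, l_{π(r)}), where the left sum is over all tuples (j₁, …, j_r) with pairwise distinct entries satisfying j_i = l_{π₀(i)} for i ∉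 A and j_i ∈ {1, …, n} ∖ {l₁, …, l_r} for i ∈ A, and the right sum is over all permutations π of {1, …, r} with π(i) = π₀(i) for all i ∉ A. -/
open Finset

/-- Injective tuples agreeing with `L` off `A` and using fresh indices on `A`. -/
def freshSet {n r : ℕ} (A : Finset (Fin r)) (L : Fin r → Fin n) : Finset (Fin r → Fin n) :=
  univ.filter (fun J : Fin r → Fin n =>
    Function.Injective J ∧ (∀ i ∉ A, J i = L i) ∧ (∀ i ∈ A, ∀ j, J i ≠ L j))

/-- As `freshSet (insert k A) L`, but the entry at `k` is unconstrained. -/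
def freeSet {n r : ℕ} (A : Finset (Fin r)) (k : Fin r) (L : Fin r → Fin n) :
    Finset (Fin r → Fin n) :=
  univ.filter (fun J : Fin r → Fin n =>
    Function.Injective J ∧ (∀ i ∉ insert k A, J i = L i) ∧ (∀ i ∈ A, ∀ j, J i ≠ L j))

lemma update_inj {n r : ℕ} (J : Fin r → Fin n) (k : Fin r) (a : Fin n)
    (hJ : Function.Injective J) (ha : ∀ j, j ≠ k → J j ≠ a) :
    Function.Injective (Function.update J k a) := by
  intro x y hxy
  by_cases hx : x = k <;> by_cases hy : y = k
  · rw [hx, hy]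
  · subst hx
    simp only [Function.update_self, Function.update_of_ne hy] at hxy
    exact absurd hxy.symm (ha y hy)
  · subst hy
    simp only [Function.update_self, Function.update_of_ne hx] at hxy
    exact absurd hxy (ha x hx)
  · simp only [Function.update_of_ne hx, Function.update_of_ne hy] at hxy
    exact hJ hxy

lemma sum_freeSet {n r : ℕ} (b : (Fin r → Fin n) → ℝ)
    (hsum : ∀ (J : Fin r → Fin n), Function.Injective J → ∀ i : Fin r,
      ∑ a ∈ univ \ (univ.erase i).image J, b (Function.update J i a) = 0)
    (A : Finset (Fin r)) (k : Fin r) (hk : k ∉ A)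
    (L : Fin r → Fin n) (hL : Function.Injective L) :
    ∑ J ∈ freeSet A k L, b J = 0 := by
  have h1 : ∑ G ∈ freshSet A L, ∑ a ∈ univ \ (univ.erase k).image G,
      b (Function.update G k a) = 0 := by
    apply Finset.sum_eq_zero
    intro G hG
    exact hsum G (by simp only [freshSet, mem_filter] at hG; exact hG.2.1) k
  rw [← h1, Finset.sum_sigma']
  symm
  refine Finset.sum_bij' (fun x _ => Function.update x.1 k x.2)
    (fun J _ => ⟨Function.update J k (L k), J k⟩) ?_ ?_ ?_ ?_ ?_
  · rintro ⟨G, a⟩ h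
    simp only [freshSet, freeSet, mem_sigma, mem_filter, mem_univ, true_and, mem_sdiff, mem_image,
      mem_erase, and_true, not_exists, not_and] at h ⊢
    obtain ⟨⟨hG, h2, h3⟩, h4⟩ := h
    refine ⟨update_inj _ _ _ hG h4, ?_, ?_⟩
    · intro i hi
      rw [mem_insert, not_or] at hi
      rw [Function.update_of_ne hi.1]
      exact h2 i hi.2
    · intro i hi j
      rw [Function.update_of_ne (by rintro rfl; exact hk hi)]
      exact h3 i hi j
  · intro J h
    simp only [freshSet, freeSet, mem_sigma, mem_filter, mem_univ, true_and, mem_sdiff, mem_image,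
      mem_erase, and_true, not_exists, not_and] at h ⊢
    obtain ⟨hJ, h2, h3⟩ := h
    refine ⟨⟨update_inj _ _ _ hJ ?_, ?_, ?_⟩, ?_⟩
    · intro j hj
      by_cases hjA : j ∈ A
      · exact h3 j hjA k
      · rw [h2 j (by simp [hj, hjA])]
        exact fun h => hj (hL h)
    · intro i hi
      by_cases hik : i = k
      · subst hik; simp
      · rw [Function.update_of_ne hik]
        exact h2 i (by simp [hik, hi])
    · intro i hi j
      rw [Function.update_of_ne (by rintro rfl; exact hk hi)]
      exact h3 i hi j
    · intro j hj
      rw [Function.update_of_ne hj]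
      exact fun h => hj (hJ h)
  · rintro ⟨G, a⟩ h
    simp only [freshSet, mem_sigma, mem_filter, mem_univ, true_and] at h
    have : L k = G k := (h.1.2.1 k hk).symm
    simp [this]
  · intro J h
    simp
  · intros
    rfl

lemma sum_freshSet_insert {n r : ℕ} (b : (Fin r → Fin n) → ℝ)
    (hsum : ∀ (J : Fin r → Fin n), Function.Injective J → ∀ i : Fin r,
      ∑ a ∈ univ \ (univ.erase i).image J, b (Function.update J i a) = 0)
    (A : Finset (Fin r)) (k : Fin r) (hk : k ∉ A)
    (L : Fin r → Fin n) (hL : Function.Injective L) :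
    ∑ J ∈ freshSet (insert k A) L, b J =
      - ∑ t ∈ insert k A, ∑ J ∈ freshSet A (L ∘ Equiv.swap k t), b J := by
  have h0 := sum_freeSet b hsum A k hk L hL
  rw [← Finset.sum_filter_add_sum_filter_not _ (fun J => ∀ j, J k ≠ L j)] at h0
  have e1 : (freeSet A k L).filter (fun J => ∀ j, J k ≠ L j) = freshSet (insert k A) L := by
    ext J
    simp only [freshSet, freeSet, mem_filter, mem_univ, true_and, mem_insert, forall_eq_or_imp]
    tauto
  have e2 : (freeSet A k L).filter (fun J => ¬ ∀ j, J k ≠ L j) =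
      (insert k A).biUnion (fun t => freshSet A (L ∘ Equiv.swap k t)) := by
    ext J
    simp only [freshSet, freeSet, mem_filter, mem_univ, true_and, mem_biUnion, Function.comp]
    constructor
    · rintro ⟨⟨hJ, h2, h3⟩, h4⟩
      push Not at h4
      obtain ⟨t, ht⟩ := h4
      have htA : t ∈ insert k A := by
        by_contra hcon
        have := h2 t hcon
        rw [← ht] at this
        exact hcon (by rw [hJ this]; simp)
      refine ⟨t, htA, hJ, ?_, ?_⟩
      · intro i hi
        by_cases hik : i = k
        · subst hik; simpa using ht
        · have hit : i ≠ t := by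
            rintro rfl
            simp [hik, hi] at htA
          rw [Equiv.swap_apply_of_ne_of_ne hik hit]
          exact h2 i (by simp [hik, hi])
      · intro i hi j
        exact h3 i hi _
    · rintro ⟨t, htA, hJ, h2, h3⟩
      refine ⟨⟨hJ, ?_, ?_⟩, ?_⟩
      · intro i hi
        have hit : i ≠ t := by rintro rfl; exact hi htA
        rw [mem_insert, not_or] at hi
        rw [h2 i hi.2, Equiv.swap_apply_of_ne_of_ne hi.1 hit]
      · intro i hi j
        have := h3 i hi (Equiv.swap k t j)
        simpa using this
      · intro h
        apply h t
        have := h2 k hk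
        simpa using this
  rw [e1, e2, Finset.sum_biUnion] at h0
  · linarith
  · intro t _ s _ hts
    rw [Function.onFun, Finset.disjoint_left]
    intro J h1 h2
    simp only [freshSet, mem_filter, mem_univ, true_and, Function.comp] at h1 h2
    have a1 := h1.2.1 k hk
    have a2 := h2.2.1 k hk
    rw [Equiv.swap_apply_left] at a1 a2
    exact hts (hL (a1.symm.trans a2))

lemma sum_perm_insert {n r : ℕ} (b : (Fin r → Fin n) → ℝ)
    (A : Finset (Fin r)) (k : Fin r) (hk : k ∉ A) (L : Fin r → Fin n) :
    ∑ π ∈ univ.filter (fun π : Equiv.Perm (Fin r) => ∀ i ∉ insert k A, π i = i), b (L ∘ π) =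
    ∑ t ∈ insert k A, ∑ π ∈ univ.filter (fun π : Equiv.Perm (Fin r) => ∀ i ∉ A, π i = i),
      b ((L ∘ Equiv.swap k t) ∘ π) := by
  rw [Finset.sum_sigma']
  refine Finset.sum_bij' (fun π _ => ⟨π k, Equiv.swap k (π k) * π⟩)
    (fun x _ => Equiv.swap k x.1 * x.2) ?_ ?_ ?_ ?_ ?_
  · intro π h
    simp only [mem_sigma, mem_filter, mem_univ, true_and, Equiv.Perm.mul_apply] at h ⊢
    constructor
    · by_contra hcon
      have := π.injective (h _ hcon)
      rw [this] at hcon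
      simp at hcon
    · intro i hi
      by_cases hik : i = k
      · subst hik; simp
      · have h1 := h i (by simp [hik, hi])
        rw [h1, Equiv.swap_apply_of_ne_of_ne hik]
        intro h2
        exact hik (π.injective (h1.trans h2))
  · rintro ⟨t, σ⟩ h
    simp only [mem_sigma, mem_filter, mem_univ, true_and, Equiv.Perm.mul_apply] at h ⊢
    intro i hi
    have hit : i ≠ t := by rintro rfl; exact hi h.1
    rw [mem_insert, not_or] at hi
    rw [h.2 i hi.2, Equiv.swap_apply_of_ne_of_ne hi.1 hit]
  · intro π h
    simp
  · rintro ⟨t, σ⟩ h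
    simp only [mem_sigma, mem_filter, mem_univ, true_and] at h
    simp [h.2 k hk]
  · intro π h
    congr 1
    funext i
    simp

lemma fresh_aux {n r : ℕ} (b : (Fin r → Fin n) → ℝ)
    (hsum : ∀ (J : Fin r → Fin n), Function.Injective J → ∀ i : Fin r,
      ∑ a ∈ univ \ (univ.erase i).image J, b (Function.update J i a) = 0)
    (A : Finset (Fin r)) : ∀ (L : Fin r → Fin n), Function.Injective L →
    ∑ J ∈ freshSet A L, b J = (-1 : ℝ) ^ A.card *
      ∑ π ∈ univ.filter (fun π : Equiv.Perm (Fin r) => ∀ i ∉ A, π i = i), b (L ∘ π) := by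
  induction A using Finset.induction_on with
  | empty =>
    intro L hL
    have e1 : freshSet ∅ L = {L} := by
      ext J
      simp only [freshSet, mem_filter, mem_univ, true_and, mem_singleton]
      constructor
      · rintro ⟨-, h, -⟩
        funext i
        exact h i (by simp)
      · rintro rfl
        exact ⟨hL, by simp, by simp⟩
    have e2 : univ.filter (fun π : Equiv.Perm (Fin r) => ∀ i ∉ (∅ : Finset (Fin r)), π i = i)
        = {1} := by
      ext π
      simp [Equiv.ext_iff]
    rw [e1, e2]
    simp
  | insert k A hk ih =>
    intro L hL
    rw [sum_freshSet_insert b hsum A k hk L hL, sum_perm_insert b A k hk L,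
      card_insert_of_notMem hk, pow_succ, Finset.mul_sum, ← Finset.sum_neg_distrib]
    refine Finset.sum_congr rfl fun t _ => ?_
    rw [ih _ (hL.comp (Equiv.injective _))]
    ring

theorem fresh_index_sum_to_signed_permutation_sum (n r : ℕ) (hr : 0 < r) (hrn : r ≤ n)
    (b : (Fin r → Fin n) → ℝ)
    (hsum : ∀ (J : Fin r → Fin n), Function.Injective J → ∀ i : Fin r,
      ∑ a ∈ univ \ (univ.erase i).image J, b (Function.update J i a) = 0)
    (L : Fin r → Fin n) (hL : Function.Injective L)
    (A : Finset (Fin r)) (π₀ : Equiv.Perm (Fin r)) (hπ₀ : ∀ i ∈ A, π₀ i = i) :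
    ∑ J ∈ univ.filter (fun J : Fin r → Fin n =>
        Function.Injective J ∧ (∀ i ∉ A, J i = L (π₀ i)) ∧
          (∀ i ∈ A, J i ∉ univ.image L)),
      b J =
    (-1 : ℝ) ^ A.card *
      ∑ π ∈ univ.filter (fun π : Equiv.Perm (Fin r) => ∀ i ∉ A, π i = π₀ i),
        b (fun i => L (π i)) := by
  have h := fresh_aux b hsum A (L ∘ π₀) (hL.comp π₀.injective)
  have e1 : univ.filter (fun J : Fin r → Fin n =>
        Function.Injective J ∧ (∀ i ∉ A, J i = L (π₀ i)) ∧
          (∀ i ∈ A, J i ∉ univ.image L)) = freshSet A (L ∘ π₀) := by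
    ext J
    simp only [freshSet, mem_filter, mem_univ, true_and, mem_image, not_exists, Function.comp]
    refine and_congr_right fun _ => and_congr_right fun _ => forall₂_congr fun i _ => ?_
    constructor
    · intro h j h2
      exact h _ h2.symm
    · intro h j h2
      apply h (π₀.symm j)
      simp [h2]
  rw [e1, h]
  congr 1
  refine Finset.sum_bij' (fun π _ => π₀ * π) (fun π _ => π₀⁻¹ * π) ?_ ?_ ?_ ?_ ?_
  · intro π h
    simp only [mem_filter, mem_univ, true_and, Equiv.Perm.mul_apply] at h ⊢
    intro i hi
    rw [h i hi]
  · intro π h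
    simp only [mem_filter, mem_univ, true_and, Equiv.Perm.mul_apply] at h ⊢
    intro i hi
    rw [h i hi]
    simp
  · intro π _
    simp
  · intro π _
    simp
  · intro π _
    rfl
end

section
/- Let n be a positive integer and k a real number with 0 ≤ k ≤ n. Define a linear map Ẽ on the multilinear polynomials in ℝ[x₁, …, xₙ] by Ẽ[Π_{i∈I} x_i] = Π_{j=0}^{|I|−1} (k−j)/(n−j) for each subset I ⊆ {1, …, n} (so Ẽ[1] = 1). Then for every polynomial g ∈ ℝ[x₁, …, xₙ] such that 2·indexdeg(g) ≤ min{2⌊min{k, n−k}⌋ + 2, n}, one has Ẽ[red(g²)] ≥ 0, where red denotes the multilinear reduction replacing each x_iᵗ (t ≥ 1) by x_i. -/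
open MvPolynomial Finset

/-- The multilinear reduction: replace each `x_i ^ t` (`t ≥ 1`) by `x_i` in every
monomial. -/
noncomputable def red {n : ℕ} (p : MvPolynomial (Fin n) ℝ) : MvPolynomial (Fin n) ℝ :=
  ∑ d ∈ p.support,
    monomial (∑ i ∈ d.support, Finsupp.single i 1) (p.coeff d)

/-- The knapsack pseudo-expectation: the linear map on multilinear polynomials
determined by `Ẽ[∏_{i∈I} x_i] = ∏_{j=0}^{|I|−1} (k−j)/(n−j)`. -/
noncomputable def Eknap (n : ℕ) (k : ℝ) (p : MvPolynomial (Fin n) ℝ) : ℝ :=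
  ∑ d ∈ p.support, p.coeff d *
    ∏ j ∈ Finset.range d.support.card, ((k - j) / ((n : ℝ) - j))

/-- The moment sequence of the knapsack pseudo-expectation. -/
noncomputable def kmom (n : ℕ) (k : ℝ) (u : ℕ) : ℝ :=
  ∏ j ∈ Finset.range u, ((k - j) / ((n : ℝ) - j))

/-- The pseudo-expectation of `x` times the monomial of `J`. -/
noncomputable def kF {n : ℕ} (k : ℝ) (x : Finset (Fin n) → ℝ) (J : Finset (Fin n)) : ℝ :=
  ∑ I : Finset (Fin n), x I * kmom n k (I ∪ J).card

lemma kF_add {n : ℕ} (k : ℝ) (x y : Finset (Fin n) → ℝ) (J : Finset (Fin n)) :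
    kF k (x + y) J = kF k x J + kF k y J := by
  simp [kF, add_mul, Finset.sum_add_distrib]

lemma kF_symm {n : ℕ} (k : ℝ) (x y : Finset (Fin n) → ℝ) :
    ∑ J, y J * kF k x J = ∑ J, x J * kF k y J := by
  simp only [kF, Finset.mul_sum]
  rw [Finset.sum_comm]
  refine Finset.sum_congr rfl fun I _ => Finset.sum_congr rfl fun J _ => ?_
  rw [Finset.union_comm]; ring

lemma kmom_succ (n : ℕ) (k : ℝ) (u : ℕ) :
    kmom n k (u + 1) = kmom n k u * ((k - u) / ((n : ℝ) - u)) := by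
  rw [kmom, Finset.prod_range_succ, kmom]

lemma sum_superset_succ {n : ℕ} (T : Finset (Fin n)) (f : Finset (Fin n) → ℝ) :
    ∑ I : Finset (Fin n), (if T ⊆ I ∧ I.card = T.card + 1 then f I else 0)
      = ∑ i ∈ Tᶜ, f (insert i T) := by
  rw [← Finset.sum_filter]
  symm
  refine Finset.sum_bij (fun i _ => insert i T) ?_ ?_ ?_ ?_
  · intro i hi
    simp only [Finset.mem_compl] at hi
    simp [Finset.card_insert_of_notMem hi]
  · intro i hi j hj h
    simp only [Finset.mem_compl] at hi hj
    have : i ∈ insert j T := h ▸ Finset.mem_insert_self i T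
    rcases Finset.mem_insert.1 this with h | h
    · exact h
    · exact absurd h hi
  · intro I hI
    simp only [Finset.mem_filter, Finset.mem_univ, true_and] at hI
    obtain ⟨i, hi, h⟩ := (Finset.covBy_iff_exists_insert).1
      (Finset.covBy_iff_card_sdiff_eq_one.2 ⟨hI.1, by
        rw [Finset.card_sdiff_of_subset hI.1]; omega⟩)
    exact ⟨i, by simpa using hi, h⟩
  · intros; rfl

lemma kmom_ideal {n : ℕ} (k : ℝ) (T J : Finset (Fin n)) (h : (T ∪ J).card < n) :
    ∑ i ∈ Tᶜ, kmom n k (insert i T ∪ J).card = (k - T.card) * kmom n k (T ∪ J).card := by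
  have hd : Tᶜ = (J \ T) ∪ (T ∪ J)ᶜ := by
    ext i; simp; tauto
  have hdis : Disjoint (J \ T) (T ∪ J)ᶜ := by
    rw [Finset.disjoint_left]; intro i; simp; tauto
  rw [hd, Finset.sum_union hdis]
  have h1 : ∑ i ∈ J \ T, kmom n k (insert i T ∪ J).card
      = ((T ∪ J).card - T.card : ℝ) * kmom n k (T ∪ J).card := by
    rw [Finset.sum_congr rfl (g := fun _ => kmom n k (T ∪ J).card)]
    · rw [Finset.sum_const, nsmul_eq_mul]
      congr 1
      have := Finset.card_sdiff_add_card J T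
      rw [Finset.union_comm] at this
      rw [← this]; push_cast; ring
    · intro i hi
      rw [Finset.insert_union, Finset.insert_eq_of_mem]
      simp at hi ⊢; tauto
  have h2 : ∑ i ∈ (T ∪ J)ᶜ, kmom n k (insert i T ∪ J).card
      = (n - (T ∪ J).card : ℝ) * kmom n k ((T ∪ J).card + 1) := by
    rw [Finset.sum_congr rfl (g := fun _ => kmom n k ((T ∪ J).card + 1))]
    · rw [Finset.sum_const, nsmul_eq_mul, Finset.card_compl, Fintype.card_fin,
        Nat.cast_sub h.le]
    · intro i hi
      rw [Finset.insert_union, Finset.card_insert_of_notMem]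
      simpa using hi
  rw [h1, h2, kmom_succ]
  have : (n - (T ∪ J).card : ℝ) ≠ 0 := by
    have : ((T ∪ J).card : ℝ) < n := by exact_mod_cast h
    linarith
  field_simp
  ring

lemma harmonic_all {n : ℕ} (d : ℕ) (h : Finset (Fin n) → ℝ)
    (hs : ∀ I, I.card ≠ d + 1 → h I = 0)
    (hh : ∀ T : Finset (Fin n), T.card = d → ∑ I, (if T ⊆ I then h I else 0) = 0) :
    ∀ m : ℕ, m ≤ d → ∀ S : Finset (Fin n), S.card + m = d →
      ∑ I, (if S ⊆ I then h I else 0) = 0 := by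
  intro m
  induction m with
  | zero => intro _ S hS; exact hh S (by omega)
  | succ m ih =>
    intro hm S hS
    have h1 : ∑ i ∈ Sᶜ, ∑ I, (if insert i S ⊆ I then h I else 0) = 0 := by
      refine Finset.sum_eq_zero fun i hi => ih (by omega) _ ?_
      rw [Finset.card_insert_of_notMem (by simpa using hi)]; omega
    rw [Finset.sum_comm] at h1
    have h2 : ∀ I : Finset (Fin n), ∑ i ∈ Sᶜ, (if insert i S ⊆ I then h I else 0)
        = ((d + 1 : ℝ) - S.card) * (if S ⊆ I then h I else 0) := by
      intro I
      by_cases hSI : S ⊆ I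
      · by_cases hI : I.card = d + 1
        · rw [← Finset.sum_filter, Finset.sum_const, nsmul_eq_mul, if_pos hSI]
          congr 1
          have : (Sᶜ.filter fun i => insert i S ⊆ I) = I \ S := by
            ext i; simp [Finset.insert_subset_iff, hSI]; tauto
          rw [this, Finset.card_sdiff_of_subset hSI, Nat.cast_sub (Finset.card_le_card hSI), hI]
          push_cast; ring
        · simp [hs I hI]
      · rw [if_neg hSI, mul_zero]
        refine Finset.sum_eq_zero fun i _ => if_neg fun h => hSI ?_
        exact (Finset.subset_insert _ _).trans h
    simp only [h2] at h1
    rw [← Finset.mul_sum] at h1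
    rcases mul_eq_zero.1 h1 with h | h
    · exfalso
      have : (S.card : ℝ) + (m + 1) = d := by exact_mod_cast hS
      have : (0 : ℝ) ≤ m := Nat.cast_nonneg m
      linarith
    · exact h

lemma newton {n : ℕ} (φ : ℕ → ℝ) (A : Finset (Fin n)) :
    φ A.card = ∑ S ∈ A.powerset, (fwdDiff 1)^[S.card] φ 0 := by
  rw [Finset.sum_powerset_apply_card (fun s => (fwdDiff 1)^[s] φ 0)]
  simpa using shift_eq_sum_fwdDiff_iter 1 φ A.card 0

lemma kF_harmonic {n : ℕ} (k : ℝ) (d : ℕ) (h : Finset (Fin n) → ℝ)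
    (hs : ∀ I, I.card ≠ d + 1 → h I = 0) (J : Finset (Fin n)) :
    kF k h J = ∑ S ∈ J.powerset,
      (fwdDiff 1)^[S.card] (fun t => kmom n k (d + 1 + J.card - t)) 0 *
        ∑ I, (if S ⊆ I then h I else 0) := by
  simp only [Finset.mul_sum]
  rw [Finset.sum_comm, kF]
  refine Finset.sum_congr rfl fun I _ => ?_
  by_cases hI : I.card = d + 1
  · have h1 : (I ∪ J).card = d + 1 + J.card - (I ∩ J).card := by
      have := Finset.card_union_add_card_inter I J
      omega
    have h2 := newton (fun t => kmom n k (d + 1 + J.card - t)) (I ∩ J)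
    rw [h1, h2, Finset.mul_sum]
    have h3 : (I ∩ J).powerset = J.powerset.filter (fun S => S ⊆ I) := by
      ext S; simp only [Finset.mem_powerset, Finset.mem_filter, Finset.subset_inter_iff]; tauto
    rw [h3, Finset.sum_filter]
    refine Finset.sum_congr rfl fun S _ => ?_
    split_ifs <;> ring
  · simp [hs I hI]

lemma kdiff (n : ℕ) (k : ℝ) (D : ℕ) (hD : D ≤ n) (s : ℕ) : ∀ t : ℕ, s + t ≤ D →
    (fwdDiff 1)^[s] (fun t => kmom n k (D - t)) t =
      (∏ j ∈ Finset.range (D - s - t), (k - j)) * (∏ j ∈ Finset.range s, ((n : ℝ) - k - j)) /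
        ∏ j ∈ Finset.range (D - t), ((n : ℝ) - j) := by
  induction s with
  | zero => intro t ht; simp [kmom, Finset.prod_div_distrib]
  | succ s ih =>
    intro t ht
    rw [Function.iterate_succ_apply', fwdDiff, ih (t + 1) (by omega), ih t (by omega)]
    obtain ⟨w, rfl⟩ : ∃ w, D = s + 1 + t + w := ⟨D - (s + 1 + t), by omega⟩
    have e1 : s + 1 + t + w - s - (t + 1) = w := by omega
    have e2 : s + 1 + t + w - s - t = w + 1 := by omega
    have e3 : s + 1 + t + w - (s + 1) - t = w := by omega
    have e4 : s + 1 + t + w - (t + 1) = s + w := by omega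
    have e5 : s + 1 + t + w - t = s + w + 1 := by omega
    rw [e1, e2, e3, e4, e5]
    simp only [Finset.prod_range_succ]
    have hne : ∏ j ∈ Finset.range (s + w), ((n : ℝ) - j) ≠ 0 := by
      refine Finset.prod_ne_zero_iff.2 fun j hj => ?_
      have : j < n := by have := Finset.mem_range.1 hj; omega
      have : (j : ℝ) < n := by exact_mod_cast this
      linarith
    have hne2 : (n : ℝ) - ((s + w : ℕ) : ℝ) ≠ 0 := by
      have : s + w < n := by omega
      have : ((s + w : ℕ) : ℝ) < n := by exact_mod_cast this
      linarith
    field_simp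
    push_cast
    ring

lemma decomp {n : ℕ} (d : ℕ) (c : Finset (Fin n) → ℝ) (hc : ∀ I, I.card ≠ d + 1 → c I = 0) :
    ∃ b h : Finset (Fin n) → ℝ, (∀ T, T.card ≠ d → b T = 0) ∧
      (∀ I, I.card ≠ d + 1 → h I = 0) ∧
      (∀ T : Finset (Fin n), T.card = d → ∑ I, (if T ⊆ I then h I else 0) = 0) ∧
      ∀ I, c I = h I + ∑ T, b T * (if T ⊆ I ∧ I.card = T.card + 1 then 1 else 0) := by
  let v : Finset (Fin n) → EuclideanSpace ℝ (Finset (Fin n)) := fun T =>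
    WithLp.toLp 2 fun I => if T.card = d ∧ T ⊆ I ∧ I.card = T.card + 1 then 1 else 0
  obtain ⟨y, hy, z, hz, hyz⟩ := (Submodule.span ℝ (Set.range v)).exists_add_mem_mem_orthogonal
    (WithLp.toLp 2 c)
  obtain ⟨b, hb⟩ := (Submodule.mem_span_range_iff_exists_fun ℝ).1 hy
  have key : ∀ I, c I = z I + ∑ T, b T * v T I := by
    intro I
    have := congrArg (fun x : EuclideanSpace ℝ (Finset (Fin n)) => x I) hyz
    simp [← hb] at this
    rw [this]; ring
  have hzs : ∀ I : Finset (Fin n), I.card ≠ d + 1 → z I = 0 := by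
    intro I hI
    have h1 := key I
    rw [hc I hI, Finset.sum_eq_zero] at h1
    · linarith
    · intro T _
      simp only [v]
      rw [if_neg, mul_zero]
      rintro ⟨h1, _, h2⟩
      omega
  refine ⟨fun T => if T.card = d then b T else 0, fun I => z I, ?_, hzs, ?_, ?_⟩
  · intro T hT; simp [hT]
  · intro T hT
    have h1 := (Submodule.mem_orthogonal _ _).1 hz (v T) (Submodule.subset_span ⟨T, rfl⟩)
    rw [PiLp.inner_apply] at h1
    refine Eq.trans ?_ h1
    refine Finset.sum_congr rfl fun I _ => ?_
    by_cases hI : I.card = d + 1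
    · simp [v, hT, hI]
    · simp [hzs I hI]
  · intro I
    rw [key I]
    congr 1
    refine Finset.sum_congr rfl fun T _ => ?_
    by_cases hT : T.card = d <;> simp [v, hT]

lemma kpsd (n : ℕ) (k : ℝ) (d : ℕ) : 2 * d ≤ n → (∀ j < d, (j : ℝ) ≤ k ∧ (j : ℝ) ≤ n - k) →
    ∀ c : Finset (Fin n) → ℝ, (∀ I, d < I.card → c I = 0) → 0 ≤ ∑ J, c J * kF k c J := by
  induction d with
  | zero =>
    intro _ _ c hc
    have hz : ∀ I : Finset (Fin n), I ≠ ∅ → c I = 0 := fun I hI =>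
      hc I (Finset.card_pos.2 (Finset.nonempty_iff_ne_empty.2 hI))
    rw [Finset.sum_eq_single ∅ (fun I _ hI => by rw [hz I hI, zero_mul]) (by simp), kF,
      Finset.sum_eq_single ∅ (fun I _ hI => by rw [hz I hI, zero_mul]) (by simp)]
    simp [kmom]
    exact mul_self_nonneg _
  | succ d ih =>
    intro hdn hk c hc
    obtain ⟨b, h, hb, hs, hh, hdec⟩ := decomp d (fun I => if I.card = d + 1 then c I else 0)
      (fun I hI => if_neg hI)
    set c' : Finset (Fin n) → ℝ := fun I => (if I.card = d + 1 then 0 else c I) +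
      (k - d) * b I with hc'def
    have hc' : ∀ I, d < I.card → c' I = 0 := by
      intro I hI
      simp only [hc'def]
      rw [hb I (by omega)]
      by_cases h1 : I.card = d + 1
      · simp [h1]
      · simp [h1, hc I (by omega)]
    have hz : ∀ I, d + 1 < I.card → (h + c') I = 0 := by
      intro I hI
      simp [hs I (by omega), hc' I (by omega)]
    have hA : ∀ J : Finset (Fin n), J.card ≤ d + 1 → kF k c J = kF k (h + c') J := by
      intro J hJ
      have hU : ∑ I : Finset (Fin n), (∑ T, b T * (if T ⊆ I ∧ I.card = T.card + 1 then 1 else 0))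
          * kmom n k (I ∪ J).card = ∑ T, (k - d) * b T * kmom n k (T ∪ J).card := by
        simp only [Finset.sum_mul]
        rw [Finset.sum_comm]
        refine Finset.sum_congr rfl fun T _ => ?_
        by_cases hT : T.card = d
        · have h1 := sum_superset_succ T (fun I => kmom n k (I ∪ J).card)
          have hlt : (T ∪ J).card < n := by
            have := Finset.card_union_le T J
            omega
          rw [kmom_ideal k T J hlt, hT] at h1
          rw [mul_comm (k - d : ℝ), mul_assoc, ← h1, Finset.mul_sum]
          refine Finset.sum_congr rfl fun I _ => ?_
          rw [hT]
          split_ifs <;> ring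
        · simp [hb T hT]
      have hcc : ∀ I, c I = (if I.card = d + 1 then 0 else c I) + (h I +
          ∑ T, b T * (if T ⊆ I ∧ I.card = T.card + 1 then 1 else 0)) := by
        intro I
        rw [← hdec I]
        split_ifs <;> simp
      calc kF k c J = ∑ I, ((if I.card = d + 1 then 0 else c I) + (h I +
          ∑ T, b T * (if T ⊆ I ∧ I.card = T.card + 1 then 1 else 0))) *
            kmom n k (I ∪ J).card := Finset.sum_congr rfl fun I _ => by rw [← hcc I]
        _ = kF k (h + c') J := by
          simp only [add_mul, Finset.sum_add_distrib]
          rw [hU, kF]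
          simp only [hc'def, Pi.add_apply, add_mul, Finset.sum_add_distrib]
          ring
    have hall := harmonic_all d h hs hh
    have hB0 : ∀ J : Finset (Fin n), J.card ≤ d → kF k h J = 0 := by
      intro J hJ
      rw [kF_harmonic k d h hs J]
      refine Finset.sum_eq_zero fun S hS => ?_
      have hSJ := Finset.card_le_card (Finset.mem_powerset.1 hS)
      rw [hall (d - S.card) (by omega) S (by omega), mul_zero]
    have hB1 : ∀ J : Finset (Fin n), 0 ≤ h J * kF k h J := by
      intro J
      by_cases hJ : J.card = d + 1
      · rw [kF_harmonic k d h hs J, Finset.sum_eq_single J]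
        · have h1 : ∑ I, (if J ⊆ I then h I else 0) = h J := by
            rw [Finset.sum_eq_single J]
            · simp
            · intro I _ hI
              by_cases hJI : J ⊆ I
              · rw [if_pos hJI]
                refine hs I fun hc => hI ?_
                exact (Finset.eq_of_subset_of_card_le hJI (by omega)).symm
              · rw [if_neg hJI]
            · simp
          rw [h1, hJ, kdiff n k (d + 1 + (d + 1)) (by omega) (d + 1) 0 (by omega)]
          have h2 : d + 1 + (d + 1) - (d + 1) - 0 = d + 1 := by omega
          rw [h2]
          have p1 : 0 ≤ ∏ j ∈ Finset.range (d + 1), (k - j) :=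
            Finset.prod_nonneg fun j hj => by
              have := (hk j (Finset.mem_range.1 hj)).1; linarith
          have p2 : 0 ≤ ∏ j ∈ Finset.range (d + 1), ((n : ℝ) - k - j) :=
            Finset.prod_nonneg fun j hj => by
              have := (hk j (Finset.mem_range.1 hj)).2; linarith
          have p3 : 0 ≤ ∏ j ∈ Finset.range (d + 1 + (d + 1) - 0), ((n : ℝ) - j) :=
            Finset.prod_nonneg fun j hj => by
              have : j ≤ n := by have := Finset.mem_range.1 hj; omega
              have : (j : ℝ) ≤ n := by exact_mod_cast this
              linarith
          have p4 := div_nonneg (mul_nonneg p1 p2) p3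
          have p5 := mul_nonneg p4 (mul_self_nonneg (h J))
          linarith
        · intro S hS hne
          have hSJ := Finset.mem_powerset.1 hS
          have hlt := Finset.card_lt_card (hSJ.ssubset_of_ne hne)
          rw [hall (d - S.card) (by omega) S (by omega), mul_zero]
        · simp
      · rw [hs J hJ, zero_mul]
    have hC : ∀ J, c' J * kF k h J = 0 := by
      intro J
      by_cases hJ : J.card ≤ d
      · rw [hB0 J hJ, mul_zero]
      · rw [hc' J (by omega), zero_mul]
    have e1 : ∑ J, c J * kF k c J = ∑ J, c J * kF k (h + c') J := by
      refine Finset.sum_congr rfl fun J _ => ?_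
      by_cases hJ : J.card ≤ d + 1
      · rw [hA J hJ]
      · rw [hc J (by omega), zero_mul, zero_mul]
    have e2 : ∑ J, (h + c') J * kF k c J = ∑ J, (h + c') J * kF k (h + c') J := by
      refine Finset.sum_congr rfl fun J _ => ?_
      by_cases hJ : J.card ≤ d + 1
      · rw [hA J hJ]
      · rw [hz J (by omega), zero_mul, zero_mul]
    have e3 : ∑ J, (h + c') J * kF k (h + c') J = ∑ J, h J * kF k h J + ∑ J, c' J * kF k h J
        + (∑ J, h J * kF k c' J + ∑ J, c' J * kF k c' J) := by
      simp only [kF_add, Pi.add_apply, add_mul, mul_add, Finset.sum_add_distrib]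
    rw [e1, kF_symm, e2, e3, kF_symm k c' h, Finset.sum_eq_zero (fun J _ => hC J)]
    have f1 : 0 ≤ ∑ J, h J * kF k h J := Finset.sum_nonneg fun J _ => hB1 J
    have f2 := ih (by omega) (fun j hj => hk j (by omega)) c' hc'
    linarith

/-- The pseudo-expectation as a linear map on all polynomials. -/
noncomputable def kEL (n : ℕ) (k : ℝ) : MvPolynomial (Fin n) ℝ →ₗ[ℝ] ℝ :=
  (MvPolynomial.basisMonomials (Fin n) ℝ).constr ℝ fun d => kmom n k d.support.card

lemma kEL_monomial (n : ℕ) (k : ℝ) (d : Fin n →₀ ℕ) (a : ℝ) :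
    kEL n k (monomial d a) = a * kmom n k d.support.card := by
  have h1 : monomial d a = a • MvPolynomial.basisMonomials (Fin n) ℝ d := by
    simp [MvPolynomial.smul_monomial]
  rw [h1, map_smul, kEL, Module.Basis.constr_basis, smul_eq_mul]

lemma Eknap_eq (n : ℕ) (k : ℝ) (p : MvPolynomial (Fin n) ℝ) : Eknap n k p = kEL n k p := by
  conv_rhs => rw [← MvPolynomial.support_sum_monomial_coeff p]
  rw [map_sum]
  simp only [kEL_monomial]
  rfl

lemma kEL_red (n : ℕ) (k : ℝ) (p : MvPolynomial (Fin n) ℝ) : kEL n k (red p) = kEL n k p := by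
  conv_rhs => rw [← MvPolynomial.support_sum_monomial_coeff p]
  rw [red, map_sum, map_sum]
  refine Finset.sum_congr rfl fun d _ => ?_
  rw [kEL_monomial, kEL_monomial]
  congr 3
  ext i
  simp [Finsupp.finsetSum_apply, Finsupp.single_apply]

lemma kEL_sq (n : ℕ) (k : ℝ) (g : MvPolynomial (Fin n) ℝ) (c : Finset (Fin n) → ℝ)
    (hc : c = fun I => ∑ d ∈ g.support, if d.support = I then g.coeff d else 0) :
    kEL n k (g ^ 2) = ∑ J, c J * kF k c J := by
  have h0 : ∀ f : Finset (Fin n) → ℝ, ∑ I, c I * f I = ∑ d ∈ g.support, g.coeff d * f d.support := by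
    intro f
    simp only [hc, Finset.sum_mul]
    rw [Finset.sum_comm]
    refine Finset.sum_congr rfl fun d _ => ?_
    simp
  rw [h0]
  simp only [kF, h0 (fun I => kmom n k (I ∪ _).card)]
  have h1 : g ^ 2 = ∑ d ∈ g.support, ∑ d' ∈ g.support,
      monomial (d + d') (g.coeff d * g.coeff d') := by
    conv_lhs => rw [← MvPolynomial.support_sum_monomial_coeff g]
    rw [sq, Finset.sum_mul_sum]
    simp only [MvPolynomial.monomial_mul]
  rw [h1]
  simp only [map_sum, kEL_monomial, Finset.mul_sum]
  refine Finset.sum_congr rfl fun d _ => Finset.sum_congr rfl fun d' _ => ?_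
  have h2 : (d + d').support = d'.support ∪ d.support := by
    ext i; simp; tauto
  rw [h2]; ring

theorem knapsack_pseudoexpectation_psd (n : ℕ) (hn : 0 < n) (k : ℝ)
    (hk0 : 0 ≤ k) (hkn : k ≤ n) (g : MvPolynomial (Fin n) ℝ)
    (hg : 2 * indexDeg g ≤ min (2 * (⌊min k ((n : ℝ) - k)⌋).toNat + 2) n) :
    0 ≤ Eknap n k (red (g ^ 2)) := by
  rw [Eknap_eq, kEL_red, kEL_sq n k g _ rfl]
  refine kpsd n k (indexDeg g) (hg.trans (min_le_right _ _)) ?_ _ ?_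
  · intro j hj
    have h1 := hg.trans (min_le_left _ _)
    have h2 : j ≤ (⌊min k ((n : ℝ) - k)⌋).toNat := by omega
    have h3 : (0 : ℝ) ≤ min k ((n : ℝ) - k) := le_min hk0 (by linarith)
    have h4 : (j : ℤ) ≤ ⌊min k ((n : ℝ) - k)⌋ := by
      have := Int.floor_nonneg.2 h3
      omega
    have h5 := Int.le_floor.1 h4
    exact le_min_iff.1 (by exact_mod_cast h5)
  · intro I hI
    refine Finset.sum_eq_zero fun d hd => if_neg ?_
    rintro rfl
    have : d.support.card ≤ indexDeg g :=
      Finset.le_sup (f := fun d : Fin n →₀ ℕ => d.support.card) hd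
    omega
end
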